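/- Let k ≥ 3, 1 ≤ ℓ ≤ k−1, a ≥ 1, 0 ≤ x ≤ k be integers, set b = 2x + ℓ + (k−ℓ)a, and suppose 0 < ε ≤ ℓ/(3a) and 1/n ≪ 1/C ≪ β, 1/b. Let V be an n-vertex set, and let ℱ₁, …, ℱ_t be t ≤ n^{2k} families, each consisting of 24β·n^b ordered b-subsets of V. Suppose G = 𝔾^{(k)}(n,p) on V with p ≥ n^{−(k−ℓ)−ε} if ℓ ≥ 2 and p ≥ C·n^{−(k−1)} if ℓ = 1. Then a.a.s. there exists a family ℱ ⊆ ⋃_{i∈[t]} ℱ_i of at most βn pairwise disjoint ordered b-sets such that |ℱ_i ∩ ℱ| ≥ β²n/b² for each i ∈ [t], and every member of ℱ spans a labeled copy of P_{a,x} in G. -/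

import Mathlib

open Finset
open scoped Classical

/-- All `k`-subsets of `Fin n` (the possible edges of a `k`-graph on `n` vertices). -/
def kSets (n k : ℕ) : Finset (Finset (Fin n)) := Finset.univ.powersetCard k

/-- The probability that the binomial random `k`-graph `G^{(k)}(n,p)` (each `k`-set is an
edge independently with probability `p`) has an edge set satisfying the property `A`. -/
noncomputable def gProb (n k : ℕ) (p : ℝ) (A : Finset (Finset (Fin n)) → Prop) : ℝ :=
  ∑ E ∈ (kSets n k).powerset.filter (fun E => A E),
    p ^ E.card * (1 - p) ^ ((kSets n k).card - E.card)

/-- Expectation of a random variable `f` of the random `k`-graph `G^{(k)}(n,p)`. -/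
noncomputable def gExpect (n k : ℕ) (p : ℝ) (f : Finset (Finset (Fin n)) → ℝ) : ℝ :=
  ∑ E ∈ (kSets n k).powerset,
    p ^ E.card * (1 - p) ^ ((kSets n k).card - E.card) * f E

/-- The degree of a vertex set `S` in the `k`-graph with edge set `E`: the number of edges
containing `S` (equivalently, the number of `(k-|S|)`-sets `T` with `S ∪ T ∈ E`). -/
def degOf {n : ℕ} (E : Finset (Finset (Fin n))) (S : Finset (Fin n)) : ℕ :=
  (E.filter (fun e => S ⊆ e)).card

/-- The minimum vertex degree (minimum 1-degree) of a `k`-graph. -/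
noncomputable def minVertexDeg {n : ℕ} (E : Finset (Finset (Fin n))) : ℕ :=
  sInf {d : ℕ | ∃ v : Fin n, degOf E {v} = d}

/-- The index set of the `i`-th edge of the path `P_{a,x}`:
`{x + i*d, x + i*d + 1, …, x + i*d + k - 1}` (here `d = k - ℓ`). -/
def edgeIdx (k d x i : ℕ) : Finset ℕ := (Finset.range k).image (fun j => x + i * d + j)

/-- The ordered `b`-tuple `w` spans a labeled copy of `P_{a,x}` (the `k`-uniform `ℓ`-path
with `a` edges, preceded and followed by `x` isolated vertices) in the edge set `E`. -/
def SpansPax {n : ℕ} (k ℓ a x : ℕ) (E : Finset (Finset (Fin n))) {b : ℕ}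
    (w : Fin b → Fin n) : Prop :=
  Function.Injective w ∧
  ∀ i < a,
    ((Finset.univ.filter (fun m : Fin b => (m : ℕ) ∈ edgeIdx k (k - ℓ) x i)).image w) ∈ E

/-- The ordered tuple `w` spans a labeled copy of the `ℓ`-path `P_a` of length `a` in `E`. -/
def SpansPath {n : ℕ} (k ℓ a : ℕ) (E : Finset (Finset (Fin n))) {b : ℕ}
    (w : Fin b → Fin n) : Prop :=
  SpansPax k ℓ a 0 E w

/-- The first `ℓ`-end of the ordered tuple `w` (its first `ℓ` vertices, as a set). -/
def firstEnd {n b : ℕ} (ℓ : ℕ) (w : Fin b → Fin n) : Finset (Fin n) :=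
  (Finset.univ.filter (fun m : Fin b => (m : ℕ) < ℓ)).image w

/-- The last `ℓ`-end of the ordered tuple `w` (its last `ℓ` vertices, as a set). -/
def lastEnd {n b : ℕ} (ℓ : ℕ) (w : Fin b → Fin n) : Finset (Fin n) :=
  (Finset.univ.filter (fun m : Fin b => b - ℓ ≤ (m : ℕ))).image w

/-- The `k`-graph with edge set `E` on vertex set `Fin n` contains a Hamiltonian `ℓ`-cycle:
there is a cyclic ordering of all `n` vertices such that each of the `n/(k-ℓ)` edges
consists of `k` consecutive vertices, consecutive edges overlapping in `ℓ` vertices. -/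
def IsHamCycle (n k ℓ : ℕ) (E : Finset (Finset (Fin n))) : Prop :=
  ∃ f : ZMod n → Fin n, Function.Bijective f ∧
    ∀ i < n / (k - ℓ),
      ((Finset.range k).image (fun j => f (((i * (k - ℓ) + j : ℕ) : ZMod n)))) ∈ E

/-- The `ℓ`-shadow of a `k`-graph: all `ℓ`-sets contained in some edge. -/
def shadowL {n : ℕ} (ℓ : ℕ) (E : Finset (Finset (Fin n))) : Finset (Finset (Fin n)) :=
  (Finset.univ.powersetCard ℓ).filter (fun S => ∃ e ∈ E, S ⊆ e)

/-- The list `v` of vertices spans a copy of the `ℓ`-path `P_a` of length `a` in `E`. -/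
def ListSpans {n : ℕ} (k ℓ a : ℕ) (E : Finset (Finset (Fin n))) (v : List (Fin n)) : Prop :=
  v.Nodup ∧ v.length = a * (k - ℓ) + ℓ ∧
    ∀ i < a, ((v.drop (i * (k - ℓ))).take k).toFinset ∈ E

/-- `Φ_F(n,p) = min { n^{v_H} p^{e_H} : H ⊆ F, e_H > 0 }`, where the subgraph `H` is given
by a nonempty edge set `E' ⊆ F` together with a vertex set `W` containing all its edges. -/
noncomputable def Phi {V : Type*} (n : ℕ) (p : ℝ) (F : Finset (Finset V)) : ℝ :=
  sInf {r : ℝ | ∃ (W : Finset V) (E' : Finset (Finset V)),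
    E' ⊆ F ∧ E'.Nonempty ∧ (∀ e ∈ E', e ⊆ W) ∧ r = (n : ℝ) ^ W.card * p ^ E'.card}

/-- The ordered tuple `w` spans a labeled copy of the `k`-graph `F` (given by its edge set
`Fe` on vertex set `Fin s`) in the edge set `E`. -/
def SpansCopy {n s : ℕ} (Fe : Finset (Finset (Fin s))) (E : Finset (Finset (Fin n)))
    (w : Fin s → Fin n) : Prop :=
  ∀ e ∈ Fe, e.image w ∈ E

/-- Concatenation of three ordered tuples. -/
def concat3 {n p q r : ℕ} (A : Fin p → Fin n) (C : Fin q → Fin n) (B : Fin r → Fin n)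
    (m : Fin (p + q + r)) : Fin n :=
  if h : (m : ℕ) < p then A ⟨(m : ℕ), h⟩
  else if h2 : (m : ℕ) < p + q then C ⟨(m : ℕ) - p, by omega⟩
  else B ⟨(m : ℕ) - (p + q), by have := m.isLt; omega⟩

/-- `w`, spanning an `ℓ`-path of length `a`, is a `W`-absorber in `E`: it avoids `W`, and
its vertex set together with `W` spans an `ℓ`-path (of length `a+1` when `|W| = k - ℓ`)
with the same two `ℓ`-ends. -/
def IsAbsorber {n : ℕ} (k ℓ a : ℕ) (E : Finset (Finset (Fin n))) {b : ℕ}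
    (w : Fin b → Fin n) (W : Finset (Fin n)) : Prop :=
  (∀ m, w m ∉ W) ∧
  ∃ w' : Fin (b + W.card) → Fin n, SpansPath k ℓ (a + 1) E w' ∧
    Finset.image w' Finset.univ = Finset.image w Finset.univ ∪ W ∧
    firstEnd ℓ w' = firstEnd ℓ w ∧ lastEnd ℓ w' = lastEnd ℓ w



/-! ### Product measure on the powerset of a finite set -/

/-- Expectation of `f` for the `p`-random subset of `Ω`. -/
noncomputable def rEx {α : Type*} (Ω : Finset α) (p : ℝ) (f : Finset α → ℝ) : ℝ :=
  ∑ E ∈ Ω.powerset, p ^ E.card * (1 - p) ^ (Ω.card - E.card) * f E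

section measure
variable {α : Type*} {Ω : Finset α} {p : ℝ}

lemma rEx_const (c : ℝ) : rEx Ω p (fun _ => c) = c := by
  unfold rEx
  rw [← Finset.sum_mul, Finset.sum_pow_mul_eq_add_pow]
  simp

lemma rEx_add (f g : Finset α → ℝ) :
    rEx Ω p (fun E => f E + g E) = rEx Ω p f + rEx Ω p g := by
  unfold rEx
  rw [← Finset.sum_add_distrib]
  exact Finset.sum_congr rfl fun _ _ => by ring

lemma rEx_sub (f g : Finset α → ℝ) :
    rEx Ω p (fun E => f E - g E) = rEx Ω p f - rEx Ω p g := by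
  unfold rEx
  rw [← Finset.sum_sub_distrib]
  exact Finset.sum_congr rfl fun _ _ => by ring

lemma rEx_smul (c : ℝ) (f : Finset α → ℝ) :
    rEx Ω p (fun E => c * f E) = c * rEx Ω p f := by
  unfold rEx
  rw [Finset.mul_sum]
  exact Finset.sum_congr rfl fun _ _ => by ring

lemma rEx_sum {ι : Type*} (s : Finset ι) (f : ι → Finset α → ℝ) :
    rEx Ω p (fun E => ∑ i ∈ s, f i E) = ∑ i ∈ s, rEx Ω p (f i) := by
  unfold rEx
  rw [Finset.sum_comm]
  exact Finset.sum_congr rfl fun _ _ => by rw [Finset.mul_sum]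

lemma rEx_congr {f g : Finset α → ℝ} (h : ∀ E, E ⊆ Ω → f E = g E) : rEx Ω p f = rEx Ω p g := by
  unfold rEx
  exact Finset.sum_congr rfl fun E hE => by rw [h E (Finset.mem_powerset.1 hE)]

lemma rEx_mono (h0 : 0 ≤ p) (h1 : p ≤ 1) {f g : Finset α → ℝ} (h : ∀ E, E ⊆ Ω → f E ≤ g E) :
    rEx Ω p f ≤ rEx Ω p g := by
  unfold rEx
  refine Finset.sum_le_sum fun E hE => ?_
  have := h E (Finset.mem_powerset.1 hE)
  have h2 : 0 ≤ 1 - p := by linarith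
  gcongr

lemma rEx_nonneg (h0 : 0 ≤ p) (h1 : p ≤ 1) {f : Finset α → ℝ} (h : ∀ E, E ⊆ Ω → 0 ≤ f E) :
    0 ≤ rEx Ω p f := by
  have := rEx_mono (Ω := Ω) h0 h1 (f := fun _ => 0) h
  rwa [rEx_const] at this

variable [DecidableEq α]

lemma rEx_insert {e : α} (he : e ∉ Ω) (f : Finset α → ℝ) :
    rEx (insert e Ω) p f = (1 - p) * rEx Ω p f + p * rEx Ω p (fun E => f (insert e E)) := by
  unfold rEx
  rw [Finset.sum_powerset_insert he, Finset.mul_sum, Finset.mul_sum]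
  congr 1
  · refine Finset.sum_congr rfl fun E hE => ?_
    have := Finset.card_le_card (Finset.mem_powerset.1 hE)
    rw [Finset.card_insert_of_notMem he, Nat.succ_sub this, pow_succ]
    ring
  · refine Finset.sum_congr rfl fun E hE => ?_
    have h2 : e ∉ E := fun h => he (Finset.mem_powerset.1 hE h)
    rw [Finset.card_insert_of_notMem he, Finset.card_insert_of_notMem h2,
      Nat.add_sub_add_right, pow_succ]
    ring

lemma rEx_plant_single {e : α} (he : e ∈ Ω) (f : Finset α → ℝ) :
    rEx Ω p (fun E => if e ∈ E then f E else 0) = p * rEx Ω p (fun E => f (insert e E)) := by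
  obtain ⟨Ω', hn, rfl⟩ : ∃ Ω', e ∉ Ω' ∧ insert e Ω' = Ω :=
    ⟨Ω.erase e, by simp, Finset.insert_erase he⟩
  rw [rEx_insert hn, rEx_insert hn]
  have : rEx Ω' p (fun E => if e ∈ E then f E else 0) = 0 := by
    refine (rEx_congr (g := fun _ => 0) fun E hE => ?_).trans (rEx_const 0)
    rw [if_neg fun h => hn (hE h)]
  rw [this]
  simp only [Finset.mem_insert_self, if_true, Finset.insert_idem]
  ring

lemma rEx_plant {S : Finset α} (hS : S ⊆ Ω) (f : Finset α → ℝ) :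
    rEx Ω p (fun E => if S ⊆ E then f E else 0) = p ^ S.card * rEx Ω p (fun E => f (E ∪ S)) := by
  induction S using Finset.induction_on generalizing f with
  | empty => simp
  | insert e S he ih =>
    have h1 : (fun E => if insert e S ⊆ E then f E else 0) =
        (fun E => if e ∈ E then (if S ⊆ E then f E else 0) else 0) := by
      funext E
      simp only [Finset.insert_subset_iff]
      split_ifs <;> simp_all
    rw [h1, rEx_plant_single (hS (Finset.mem_insert_self _ _))]
    have h2 : (fun E => if S ⊆ insert e E then f (insert e E) else 0) =
        (fun E => if S ⊆ E then f (insert e E) else 0) := by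
      funext E
      simp only [Finset.subset_insert_iff_of_notMem he]
    rw [h2, ih (fun x hx => hS (Finset.mem_insert_of_mem hx)) (fun E => f (insert e E)),
      Finset.card_insert_of_notMem he, pow_succ]
    have h3 : (fun E => f (insert e (E ∪ S))) = fun E => f (E ∪ insert e S) := by
      funext E
      rw [Finset.union_insert]
    rw [h3]
    ring

lemma rEx_sub_prob {S : Finset α} (hS : S ⊆ Ω) :
    rEx Ω p (fun E => if S ⊆ E then 1 else 0) = p ^ S.card := by
  rw [rEx_plant hS (fun _ => 1), rEx_const, mul_one]

lemma rEx_fkg [Fintype α] (h0 : 0 ≤ p) (h1 : p ≤ 1) {f g : Finset α → ℝ} (hf0 : ∀ E, 0 ≤ f E)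
    (hg0 : ∀ E, 0 ≤ g E) (hf : Monotone f) (hg : Monotone g) :
    rEx Ω p f * rEx Ω p g ≤ rEx Ω p (fun E => f E * g E) := by
  have h2 : 0 ≤ 1 - p := by linarith
  set μ : Finset α → ℝ := fun E => if E ⊆ Ω then p ^ E.card * (1 - p) ^ (Ω.card - E.card) else 0
    with hμ
  have key : ∀ F : Finset α → ℝ, rEx Ω p F = ∑ E, μ E * F E := by
    intro F
    unfold rEx
    have : Ω.powerset = Finset.univ.filter (fun E => E ⊆ Ω) := by ext; simp
    rw [this, Finset.sum_filter]
    refine Finset.sum_congr rfl fun E _ => ?_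
    simp only [hμ]
    split_ifs <;> simp
  have hμ0 : 0 ≤ μ := by
    intro E
    simp only [hμ]
    split_ifs
    · positivity
    · simp
  have := fkg f g μ hμ0 (fun E => hf0 E) (fun E => hg0 E) hf hg ?_
  · have h1' : ∑ E, μ E = 1 := by
      have := key (fun _ => 1)
      rw [rEx_const] at this
      simpa using this.symm
    rw [h1', one_mul] at this
    rw [key, key, key]
    exact this
  · intro A B
    simp only [hμ]
    by_cases hA : A ⊆ Ω
    · by_cases hB : B ⊆ Ω
      · have hi : A ⊓ B ⊆ Ω := fun x hx => hA (Finset.mem_inter.1 hx).1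
        have hu : A ⊔ B ⊆ Ω := Finset.union_subset hA hB
        rw [if_pos hA, if_pos hB, if_pos hi, if_pos hu]
        have hc : (A ⊓ B).card + (A ⊔ B).card = A.card + B.card :=
          Finset.card_inter_add_card_union A B
        have e1 := Finset.card_le_card hA
        have e2 := Finset.card_le_card hB
        have e3 := Finset.card_le_card hi
        have e4 := Finset.card_le_card hu
        apply le_of_eq
        calc _ = p ^ (A.card + B.card) * (1 - p) ^ (Ω.card - A.card + (Ω.card - B.card)) := by
              rw [pow_add, pow_add]; ring
          _ = p ^ ((A ⊓ B).card + (A ⊔ B).card) *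
              (1 - p) ^ (Ω.card - (A ⊓ B).card + (Ω.card - (A ⊔ B).card)) := by
              rw [hc]; congr 2; omega
          _ = _ := by rw [pow_add, pow_add]; ring
      · rw [if_neg hB, mul_zero]
        exact mul_nonneg (hμ0 _) (hμ0 _)
    · rw [if_neg hA, zero_mul]
      exact mul_nonneg (hμ0 _) (hμ0 _)

/-- Number of the sets `S i`, `i ∈ A`, that are contained in `E`. -/
def cnt {ι : Type*} (A : Finset ι) (S : ι → Finset α) (E : Finset α) : ℝ :=
  ∑ i ∈ A, if S i ⊆ E then 1 else 0

lemma cnt_nonneg {ι : Type*} (A : Finset ι) (S : ι → Finset α) (E : Finset α) :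
    0 ≤ cnt A S E := Finset.sum_nonneg fun _ _ => by split_ifs <;> norm_num

lemma cnt_mono {ι : Type*} (A : Finset ι) (S : ι → Finset α) : Monotone (cnt A S) := by
  intro E F h
  refine Finset.sum_le_sum fun i _ => ?_
  by_cases h1 : S i ⊆ E
  · rw [if_pos h1, if_pos (h1.trans h)]
  · rw [if_neg h1]; split_ifs <;> norm_num

/-- Janson, key step. -/
lemma janson_step [Fintype α] (h0 : 0 ≤ p) (h1 : p ≤ 1) {ι : Type*}
    (A : Finset ι) (S : ι → Finset α) (hS : ∀ i ∈ A, S i ⊆ Ω) {s : ℝ} (hs : 0 ≤ s)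
    (i : ι) (hi : i ∈ A) :
    (p ^ (S i).card - s * ∑ j ∈ A, if Disjoint (S i) (S j) then 0 else p ^ (S i ∪ S j).card) *
      rEx Ω p (fun E => Real.exp (-s * cnt A S E)) ≤
    rEx Ω p (fun E => if S i ⊆ E then Real.exp (-s * cnt A S E) else 0) := by
  set B := A.filter (fun j => ¬ Disjoint (S i) (S j)) with hB
  set B' := A.filter (fun j => Disjoint (S i) (S j)) with hB'
  have hsplit : ∀ E, cnt A S E = cnt B S E + cnt B' S E := by
    intro E
    unfold cnt
    rw [add_comm]
    exact (Finset.sum_filter_add_sum_filter_not A (fun j => Disjoint (S i) (S j)) _).symm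
  set f : Finset α → ℝ := fun E => if S i ⊆ E then 1 - Real.exp (-s * cnt B S E) else 0 with hf
  set g : Finset α → ℝ := fun E => 1 - Real.exp (-s * cnt B' S E) with hg
  have hpos : ∀ D : Finset ι, ∀ E, 0 ≤ 1 - Real.exp (-s * cnt D S E) := by
    intro D E
    have : Real.exp (-s * cnt D S E) ≤ 1 := by
      rw [Real.exp_le_one_iff]
      have := mul_nonneg hs (cnt_nonneg D S E)
      linarith
    linarith
  have hmon : ∀ D : Finset ι, Monotone fun E => 1 - Real.exp (-s * cnt D S E) := by
    intro D E F h
    have h2 := cnt_mono D S h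
    have h3 : Real.exp (-s * cnt D S F) ≤ Real.exp (-s * cnt D S E) := by
      apply Real.exp_le_exp.2
      have := mul_le_mul_of_nonneg_left h2 hs
      linarith
    simp only
    linarith
  have hf0 : ∀ E, 0 ≤ f E := by
    intro E; simp only [hf]; split_ifs
    · exact hpos _ _
    · exact le_rfl
  have hfm : Monotone f := by
    intro E F h
    simp only [hf]
    by_cases h1 : S i ⊆ E
    · rw [if_pos h1, if_pos (h1.trans h)]
      exact hmon B h
    · rw [if_neg h1]
      exact hf0 F
  have hfkg := rEx_fkg (Ω := Ω) h0 h1 hf0 (fun E => hpos B' E) hfm (hmon B')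
  set z := rEx Ω p (fun E => Real.exp (-s * cnt B' S E)) with hz
  have hgz : rEx Ω p (fun E => 1 - Real.exp (-s * cnt B' S E)) = 1 - z := by
    rw [rEx_sub, rEx_const]
  have hfg : rEx Ω p (fun E => f E * (1 - Real.exp (-s * cnt B' S E))) =
      rEx Ω p f - rEx Ω p (fun E => f E * Real.exp (-s * cnt B' S E)) := by
    rw [← rEx_sub]
    exact rEx_congr fun E _ => by ring
  rw [hgz, hfg] at hfkg
  have h3 : rEx Ω p (fun E => f E * Real.exp (-s * cnt B' S E)) ≤ rEx Ω p f * z := by linarith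
  -- independence
  have h4 : rEx Ω p (fun E => if S i ⊆ E then Real.exp (-s * cnt B' S E) else 0) =
      p ^ (S i).card * z := by
    rw [rEx_plant (hS i hi)]
    congr 1
    refine rEx_congr fun E _ => ?_
    congr 2
    unfold cnt
    refine Finset.sum_congr rfl fun j hj => ?_
    have hd : Disjoint (S i) (S j) := (Finset.mem_filter.1 hj).2
    have : S j ⊆ E ∪ S i ↔ S j ⊆ E := by
      constructor
      · intro h x hx
        rcases Finset.mem_union.1 (h hx) with h | h
        · exact h
        · exact absurd hx (Finset.disjoint_left.1 hd h)
      · exact fun h => h.trans Finset.subset_union_left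
    simp only [this]
  have h5 : rEx Ω p (fun E => if S i ⊆ E then Real.exp (-s * cnt A S E) else 0) =
      p ^ (S i).card * z - rEx Ω p (fun E => f E * Real.exp (-s * cnt B' S E)) := by
    rw [← h4, ← rEx_sub]
    refine rEx_congr fun E _ => ?_
    simp only [hf]
    split_ifs
    · rw [hsplit, mul_add, Real.exp_add]; ring
    · ring
  have h6 : rEx Ω p f ≤ p ^ (S i).card := by
    rw [← rEx_sub_prob (p := p) (hS i hi)]
    refine rEx_mono h0 h1 fun E _ => ?_
    simp only [hf]
    split_ifs
    · have := Real.exp_pos (-s * cnt B S E)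
      linarith
    · exact le_rfl
  have h7 : rEx Ω p f ≤
      s * ∑ j ∈ A, if Disjoint (S i) (S j) then 0 else p ^ (S i ∪ S j).card := by
    have e1 : ∑ j ∈ A, (if Disjoint (S i) (S j) then 0 else p ^ (S i ∪ S j).card) =
        ∑ j ∈ B, p ^ (S i ∪ S j).card := by
      rw [hB, Finset.sum_filter]
      refine Finset.sum_congr rfl fun j _ => ?_
      split_ifs <;> simp_all
    have e2 : ∑ j ∈ B, p ^ (S i ∪ S j).card =
        rEx Ω p (fun E => ∑ j ∈ B, if S i ∪ S j ⊆ E then 1 else 0) := by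
      rw [rEx_sum]
      refine Finset.sum_congr rfl fun j hj => ?_
      rw [rEx_sub_prob]
      exact Finset.union_subset (hS i hi) (hS j (Finset.mem_filter.1 hj).1)
    rw [e1, e2, ← rEx_smul]
    refine rEx_mono h0 h1 fun E _ => ?_
    simp only [hf]
    split_ifs with hE
    · have e3 : ∑ j ∈ B, (if S i ∪ S j ⊆ E then (1 : ℝ) else 0) = cnt B S E := by
        unfold cnt
        refine Finset.sum_congr rfl fun j _ => ?_
        simp only [Finset.union_subset_iff, hE, true_and]
      rw [e3]
      have := Real.add_one_le_exp (-s * cnt B S E)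
      linarith
    · exact mul_nonneg hs (Finset.sum_nonneg fun _ _ => by split_ifs <;> norm_num)
  have h8 : rEx Ω p (fun E => Real.exp (-s * cnt A S E)) ≤ z := by
    refine rEx_mono h0 h1 fun E _ => ?_
    apply Real.exp_le_exp.2
    rw [hsplit]
    have := mul_nonneg hs (cnt_nonneg B S E)
    linarith
  have h9 : 0 ≤ rEx Ω p (fun E => Real.exp (-s * cnt A S E)) :=
    rEx_nonneg h0 h1 fun E _ => (Real.exp_pos _).le
  rw [h5]
  set q := p ^ (S i).card
  set d := ∑ j ∈ A, if Disjoint (S i) (S j) then 0 else p ^ (S i ∪ S j).card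
  calc _ ≤ (q - rEx Ω p f) * rEx Ω p (fun E => Real.exp (-s * cnt A S E)) := by
        apply mul_le_mul_of_nonneg_right _ h9
        linarith
    _ ≤ (q - rEx Ω p f) * z := by
        apply mul_le_mul_of_nonneg_left h8
        linarith
    _ ≤ _ := by linarith

/-- The second moment correlation sum. -/
noncomputable def corr {ι : Type*} (p : ℝ) (A : Finset ι) (S : ι → Finset α) : ℝ :=
  ∑ i ∈ A, ∑ j ∈ A, if Disjoint (S i) (S j) then 0 else p ^ (S i ∪ S j).card

lemma janson_mgf [Fintype α] (h0 : 0 ≤ p) (h1 : p ≤ 1) {ι : Type*}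
    (A : Finset ι) (S : ι → Finset α) (hS : ∀ i ∈ A, S i ⊆ Ω) {D : ℝ} (hD : corr p A S ≤ D)
    {s : ℝ} (hs : 0 ≤ s) :
    rEx Ω p (fun E => Real.exp (-s * cnt A S E)) ≤
      Real.exp (-s * (∑ i ∈ A, p ^ (S i).card) + s ^ 2 * D / 2) := by
  set M := ∑ i ∈ A, p ^ (S i).card with hM
  set ψ : ℝ → ℝ := fun s => rEx Ω p (fun E => Real.exp (-s * cnt A S E)) with hψ
  have hder : ∀ s, HasDerivAt ψ (- rEx Ω p (fun E => cnt A S E * Real.exp (-s * cnt A S E))) s := by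
    intro s
    have : - rEx Ω p (fun E => cnt A S E * Real.exp (-s * cnt A S E)) =
        ∑ E ∈ Ω.powerset, p ^ E.card * (1 - p) ^ (Ω.card - E.card) *
          (Real.exp (-s * cnt A S E) * (-1 * cnt A S E)) := by
      unfold rEx
      rw [← Finset.sum_neg_distrib]
      exact Finset.sum_congr rfl fun _ _ => by ring
    rw [this]
    simp only [hψ]
    unfold rEx
    refine HasDerivAt.fun_sum fun E _ => ?_
    refine HasDerivAt.const_mul _ ?_
    exact ((hasDerivAt_neg s).mul_const (cnt A S E)).exp
  have hneg : ∀ s, 0 ≤ s → (M - s * D) * ψ s ≤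
      rEx Ω p (fun E => cnt A S E * Real.exp (-s * cnt A S E)) := by
    intro s hs
    have e1 : rEx Ω p (fun E => cnt A S E * Real.exp (-s * cnt A S E)) =
        ∑ i ∈ A, rEx Ω p (fun E => if S i ⊆ E then Real.exp (-s * cnt A S E) else 0) := by
      rw [← rEx_sum]
      refine rEx_congr fun E _ => ?_
      generalize Real.exp (-s * cnt A S E) = y
      rw [cnt, Finset.sum_mul]
      refine Finset.sum_congr rfl fun j _ => ?_
      split_ifs <;> simp
    rw [e1]
    have hψ0 : 0 ≤ ψ s := rEx_nonneg h0 h1 fun E _ => (Real.exp_pos _).le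
    calc (M - s * D) * ψ s ≤ (M - s * corr p A S) * ψ s := by
          apply mul_le_mul_of_nonneg_right _ hψ0
          have := mul_le_mul_of_nonneg_left hD hs
          linarith
      _ = ∑ i ∈ A, (p ^ (S i).card - s * ∑ j ∈ A,
          if Disjoint (S i) (S j) then 0 else p ^ (S i ∪ S j).card) * ψ s := by
          rw [← Finset.sum_mul, Finset.sum_sub_distrib, ← Finset.mul_sum]
          rfl
      _ ≤ _ := Finset.sum_le_sum fun i hi => janson_step h0 h1 A S hS hs i hi
  set h : ℝ → ℝ := fun s => ψ s * Real.exp (s * M - s ^ 2 * D / 2) with hh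
  have hhder : ∀ s, HasDerivAt h
      (- rEx Ω p (fun E => cnt A S E * Real.exp (-s * cnt A S E)) *
        Real.exp (s * M - s ^ 2 * D / 2) +
        ψ s * (Real.exp (s * M - s ^ 2 * D / 2) * (M - s * D))) s := by
    intro s
    refine (hder s).mul (HasDerivAt.exp ?_)
    have e1 : HasDerivAt (fun s : ℝ => s * M) (1 * M) s := (hasDerivAt_id s).mul_const M
    have e2 : HasDerivAt (fun s : ℝ => s ^ 2 * D / 2) (((2 : ℕ) * s ^ (2 - 1)) * D / 2) s :=
      ((hasDerivAt_pow 2 s).mul_const D).div_const 2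
    have e3 := e1.fun_sub e2
    have e4 : 1 * M - ((2 : ℕ) : ℝ) * s ^ (2 - 1) * D / 2 = M - s * D := by
      push_cast
      ring
    rw [e4] at e3
    exact e3
  have hanti : AntitoneOn h (Set.Ici 0) := by
    refine antitoneOn_of_deriv_nonpos (convex_Ici 0) ?_ ?_ ?_
    · exact fun s _ => (hhder s).continuousAt.continuousWithinAt
    · exact fun s _ => (hhder s).differentiableAt.differentiableWithinAt
    · intro s hs
      rw [interior_Ici] at hs
      rw [(hhder s).deriv]
      have := mul_le_mul_of_nonneg_right (hneg s (le_of_lt hs))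
        (Real.exp_pos (s * M - s ^ 2 * D / 2)).le
      linarith
  have hfin := hanti (Set.mem_Ici.2 le_rfl) (Set.mem_Ici.2 hs) hs
  have hh0 : h 0 = 1 := by
    simp [hh, hψ, rEx_const]
  rw [hh0] at hfin
  simp only [hh] at hfin
  have e : Real.exp (-s * M + s ^ 2 * D / 2) = 1 / Real.exp (s * M - s ^ 2 * D / 2) := by
    rw [one_div, ← Real.exp_neg]; congr 1; ring
  rw [e, le_div_iff₀ (Real.exp_pos _)]
  exact hfin

/-- Janson's inequality (lower tail). -/
lemma janson [Fintype α] (h0 : 0 ≤ p) (h1 : p ≤ 1) {ι : Type*}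
    (A : Finset ι) (S : ι → Finset α) (hS : ∀ i ∈ A, S i ⊆ Ω) {D : ℝ} (hD : corr p A S ≤ D)
    (hD0 : 0 < D) {t : ℝ} (ht : 0 ≤ t) :
    rEx Ω p (fun E => if cnt A S E < (∑ i ∈ A, p ^ (S i).card) - t then 1 else 0) ≤
      Real.exp (- t ^ 2 / (2 * D)) := by
  set M := ∑ i ∈ A, p ^ (S i).card with hM
  set s := t / D with hs
  have hs0 : 0 ≤ s := div_nonneg ht hD0.le
  have h2 := janson_mgf h0 h1 A S hS hD hs0
  calc _ ≤ rEx Ω p (fun E => Real.exp (s * (M - t)) * Real.exp (-s * cnt A S E)) := by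
        refine rEx_mono h0 h1 fun E _ => ?_
        split_ifs with hE
        · rw [← Real.exp_add]
          apply Real.one_le_exp
          have := mul_le_mul_of_nonneg_left hE.le hs0
          linarith
        · positivity
    _ ≤ Real.exp (s * (M - t)) * Real.exp (-s * M + s ^ 2 * D / 2) := by
        rw [rEx_smul]
        exact mul_le_mul_of_nonneg_left h2 (Real.exp_pos _).le
    _ = _ := by
        rw [← Real.exp_add]
        congr 1
        rw [hs]
        field_simp
        ring

/-- Chebyshev's inequality for counts (upper tail). -/
lemma cheby (h0 : 0 ≤ p) (h1 : p ≤ 1) {ι : Type*}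
    (A : Finset ι) (S : ι → Finset α) (hS : ∀ i ∈ A, S i ⊆ Ω) {D : ℝ} (hD : corr p A S ≤ D)
    {t : ℝ} (ht : 0 < t) :
    rEx Ω p (fun E => if (∑ i ∈ A, p ^ (S i).card) + t < cnt A S E then 1 else 0) ≤
      D / t ^ 2 := by
  set M := ∑ i ∈ A, p ^ (S i).card with hM
  have e1 : rEx Ω p (cnt A S) = M := by
    have : cnt A S = fun E => ∑ i ∈ A, if S i ⊆ E then (1 : ℝ) else 0 := rfl
    rw [this, rEx_sum]
    exact Finset.sum_congr rfl fun i hi => rEx_sub_prob (hS i hi)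
  have e2 : rEx Ω p (fun E => cnt A S E * cnt A S E) = ∑ i ∈ A, ∑ j ∈ A, p ^ (S i ∪ S j).card := by
    have : (fun E => cnt A S E * cnt A S E) =
        fun E => ∑ i ∈ A, ∑ j ∈ A, if S i ∪ S j ⊆ E then (1 : ℝ) else 0 := by
      funext E
      rw [cnt, Finset.sum_mul_sum]
      refine Finset.sum_congr rfl fun i _ => Finset.sum_congr rfl fun j _ => ?_
      simp only [Finset.union_subset_iff]
      split_ifs <;> simp_all
    rw [this, rEx_sum]
    refine Finset.sum_congr rfl fun i hi => ?_
    rw [rEx_sum]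
    exact Finset.sum_congr rfl fun j hj =>
      rEx_sub_prob (Finset.union_subset (hS i hi) (hS j hj))
  have e3 : rEx Ω p (fun E => (cnt A S E - M) ^ 2) ≤ D := by
    have : rEx Ω p (fun E => (cnt A S E - M) ^ 2) =
        rEx Ω p (fun E => cnt A S E * cnt A S E) - M * M := by
      have : (fun E => (cnt A S E - M) ^ 2) =
        (fun E => cnt A S E * cnt A S E + ((-2 * M) * cnt A S E + M * M)) := by funext E; ring
      rw [this, rEx_add, rEx_add, rEx_smul, rEx_const, e1]
      ring
    rw [this, e2]
    refine le_trans ?_ hD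
    rw [hM, Finset.sum_mul_sum, ← Finset.sum_sub_distrib]
    refine Finset.sum_le_sum fun i _ => ?_
    rw [← Finset.sum_sub_distrib]
    refine Finset.sum_le_sum fun j _ => ?_
    split_ifs with hd
    · rw [Finset.card_union_of_disjoint hd, pow_add]; simp
    · have : 0 ≤ p ^ (S i).card * p ^ (S j).card := by positivity
      linarith
  rw [le_div_iff₀ (by positivity), mul_comm, ← rEx_smul]
  refine le_trans (rEx_mono h0 h1 fun E _ => ?_) e3
  split_ifs with hE
  · have : t ≤ cnt A S E - M := by linarith
    nlinarith
  · rw [mul_zero]; positivity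

end measure


/-! ### Combinatorics of the paths -/

lemma mem_edgeIdx {k d x i m : ℕ} : m ∈ edgeIdx k d x i ↔ x + i * d ≤ m ∧ m < x + i * d + k := by
  unfold edgeIdx
  simp only [Finset.mem_image, Finset.mem_range]
  constructor
  · rintro ⟨j, hj, rfl⟩; omega
  · rintro ⟨h1, h2⟩; exact ⟨m - (x + i * d), by omega, by omega⟩

/-- Positions of the `i`-th edge. -/
def pos (b k d x i : ℕ) : Finset (Fin b) :=
  Finset.univ.filter (fun m : Fin b => (m : ℕ) ∈ edgeIdx k d x i)

lemma mem_pos {b k d x i : ℕ} {m : Fin b} :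
    m ∈ pos b k d x i ↔ x + i * d ≤ m ∧ (m : ℕ) < x + i * d + k := by
  unfold pos
  rw [Finset.mem_filter, mem_edgeIdx]
  simp

lemma card_interval {b u v : ℕ} (hv : v ≤ b) :
    (Finset.univ.filter (fun m : Fin b => u ≤ (m : ℕ) ∧ (m : ℕ) < v)).card = v - u := by
  rw [← Nat.card_Ico, ← Finset.card_map Fin.valEmbedding]
  congr 1
  ext m
  simp only [Finset.mem_map, Finset.mem_filter, Finset.mem_univ, true_and, Fin.valEmbedding_apply,
    Finset.mem_Ico]
  constructor
  · rintro ⟨y, hy, rfl⟩; exact hy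
  · intro h; exact ⟨⟨m, by omega⟩, h, rfl⟩

lemma pos_end {b k ℓ a x i : ℕ} (hlk : ℓ ≤ k) (hb : b = 2 * x + ℓ + (k - ℓ) * a) (hi : i < a) :
    x + i * (k - ℓ) + k ≤ b := by
  obtain ⟨d, rfl⟩ : ∃ d, k = ℓ + d := ⟨k - ℓ, by omega⟩
  simp only [Nat.add_sub_cancel_left] at *
  have : d * (i + 1) ≤ d * a := Nat.mul_le_mul_left _ hi
  have e : d * (i + 1) = i * d + d := by ring
  omega

lemma card_pos {b k ℓ a x i : ℕ} (hlk : ℓ ≤ k) (hb : b = 2 * x + ℓ + (k - ℓ) * a) (hi : i < a) :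
    (pos b k (k - ℓ) x i).card = k := by
  have h := card_interval (u := x + i * (k - ℓ)) (pos_end (x := x) hlk hb hi)
  have : pos b k (k - ℓ) x i = Finset.univ.filter (fun m : Fin b =>
      x + i * (k - ℓ) ≤ (m : ℕ) ∧ (m : ℕ) < x + i * (k - ℓ) + k) := by
    ext m; rw [mem_pos]; simp
  rw [this, h]; omega

lemma card_pos_union {b k ℓ a x : ℕ} (hlk : ℓ ≤ k) (hb : b = 2 * x + ℓ + (k - ℓ) * a)
    (I : Finset ℕ) : (∀ i ∈ I, i < a) → I.Nonempty →
      (k - ℓ) * I.card + ℓ ≤ (I.biUnion (pos b k (k - ℓ) x)).card := by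
  induction I using Finset.induction_on_max with
  | empty => intro _ h; simp at h
  | insert i s hs ih =>
    intro hI _
    have hia : i < a := hI i (Finset.mem_insert_self _ _)
    by_cases hne : s.Nonempty
    · have ih' := ih (fun j hj => hI j (Finset.mem_insert_of_mem hj)) hne
      have his : i ∉ s := fun h => absurd (hs i h) (lt_irrefl _)
      rw [Finset.card_insert_of_notMem his, Finset.biUnion_insert]
      set N := Finset.univ.filter (fun m : Fin b =>
        x + i * (k - ℓ) + ℓ ≤ (m : ℕ) ∧ (m : ℕ) < x + i * (k - ℓ) + k) with hN
      have hNc : N.card = k - ℓ := by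
        rw [hN, card_interval (pos_end hlk hb hia)]; omega
      have hd : Disjoint N (s.biUnion (pos b k (k - ℓ) x)) := by
        rw [Finset.disjoint_left]
        intro m h1 h2
        obtain ⟨j, hj, hm⟩ := Finset.mem_biUnion.1 h2
        rw [mem_pos] at hm
        have h3 := (Finset.mem_filter.1 h1).2
        have h4 : (j + 1) * (k - ℓ) ≤ i * (k - ℓ) := Nat.mul_le_mul_right _ (hs j hj)
        have h5 : (j + 1) * (k - ℓ) = j * (k - ℓ) + (k - ℓ) := by ring
        omega
      have hsub : N ∪ s.biUnion (pos b k (k - ℓ) x) ⊆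
          pos b k (k - ℓ) x i ∪ s.biUnion (pos b k (k - ℓ) x) := by
        refine Finset.union_subset_union ?_ le_rfl
        intro m hm
        rw [mem_pos]
        have := (Finset.mem_filter.1 hm).2
        omega
      have hc := Finset.card_le_card hsub
      rw [Finset.card_union_of_disjoint hd, hNc] at hc
      have : (k - ℓ) * (s.card + 1) = (k - ℓ) * s.card + (k - ℓ) := by ring
      omega
    · rw [Finset.not_nonempty_iff_eq_empty] at hne
      subst hne
      simp only [insert_empty_eq, Finset.card_singleton, Finset.singleton_biUnion]
      rw [card_pos hlk hb hia]; omega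

/-- The edge set of the copy of `P_{a,x}` on `w`. -/
def edges (k ℓ a x : ℕ) {n b : ℕ} (w : Fin b → Fin n) : Finset (Finset (Fin n)) :=
  (Finset.range a).image (fun i => (pos b k (k - ℓ) x i).image w)

lemma spansPax_iff {k ℓ a x n b : ℕ} {E : Finset (Finset (Fin n))} {w : Fin b → Fin n} :
    SpansPax k ℓ a x E w ↔ Function.Injective w ∧ edges k ℓ a x w ⊆ E := by
  unfold SpansPax edges
  rw [Finset.image_subset_iff]
  simp only [Finset.mem_range]
  rfl

lemma edge_inj {k ℓ a x n b : ℕ} (hlk : ℓ < k) (hb : b = 2 * x + ℓ + (k - ℓ) * a)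
    {w : Fin b → Fin n} (hw : Function.Injective w) :
    Set.InjOn (fun i => (pos b k (k - ℓ) x i).image w) (Finset.range a : Finset ℕ) := by
  have key : ∀ i j, i < a → j < a → i < j →
      (pos b k (k - ℓ) x i).image w = (pos b k (k - ℓ) x j).image w → False := by
    intro i j hi hj hij h
    have h1 := Finset.image_injective hw h
    have h2 := pos_end (x := x) hlk.le hb hi
    have h3 : (⟨x + i * (k - ℓ), by omega⟩ : Fin b) ∈ pos b k (k - ℓ) x i := by
      rw [mem_pos]; simp; omega
    rw [h1, mem_pos] at h3
    have h4 : (i + 1) * (k - ℓ) ≤ j * (k - ℓ) := Nat.mul_le_mul_right _ hij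
    have h5 : (i + 1) * (k - ℓ) = i * (k - ℓ) + (k - ℓ) := by ring
    simp only at h3
    omega
  intro i hi j hj h
  simp only [Finset.coe_range, Set.mem_Iio] at hi hj
  rcases lt_trichotomy i j with hij | hij | hij
  · exact (key i j hi hj hij h).elim
  · exact hij
  · exact (key j i hj hi hij h.symm).elim

lemma card_edges {k ℓ a x n b : ℕ} (hlk : ℓ < k) (hb : b = 2 * x + ℓ + (k - ℓ) * a)
    {w : Fin b → Fin n} (hw : Function.Injective w) : (edges k ℓ a x w).card = a := by
  unfold edges
  rw [Finset.card_image_of_injOn (edge_inj hlk hb hw), Finset.card_range]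

lemma edges_sub {k ℓ a x n b : ℕ} (hlk : ℓ < k) (hb : b = 2 * x + ℓ + (k - ℓ) * a)
    {w : Fin b → Fin n} (hw : Function.Injective w) : edges k ℓ a x w ⊆ kSets n k := by
  unfold edges kSets
  rw [Finset.image_subset_iff]
  intro i hi
  rw [Finset.mem_powersetCard]
  refine ⟨Finset.subset_univ _, ?_⟩
  rw [Finset.card_image_of_injective _ hw, card_pos hlk.le hb (Finset.mem_range.1 hi)]

lemma count_fiber {n b : ℕ} (Q : Finset (Fin n)) (g : Q → Fin b) :
    (Finset.univ.filter (fun w : Fin b → Fin n => ∀ q : Q, w (g q) = q)).card * n ^ Q.card ≤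
      n ^ b := by
  rcases (Finset.univ.filter (fun w : Fin b → Fin n => ∀ q : Q, w (g q) = q)).eq_empty_or_nonempty
    with h | ⟨w0, h0⟩
  · rw [h]; simp
  · have h0 := (Finset.mem_filter.1 h0).2
    have hg : Function.Injective g := by
      intro q q' h
      apply Subtype.ext
      rw [← h0 q, ← h0 q', h]
    set R := Finset.univ.image g with hR
    have hRc : R.card = Q.card := by
      rw [hR, Finset.card_image_of_injective _ hg]; simp
    have hsub : Finset.univ.filter (fun w : Fin b → Fin n => ∀ q : Q, w (g q) = q) ⊆
        Fintype.piFinset (fun m => if m ∈ R then {w0 m} else Finset.univ) := by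
      intro w hw
      have hw := (Finset.mem_filter.1 hw).2
      rw [Fintype.mem_piFinset]
      intro m
      split_ifs with hm
      · obtain ⟨q, -, rfl⟩ := Finset.mem_image.1 hm
        rw [Finset.mem_singleton, hw, h0]
      · simp
    have hc := Finset.card_le_card hsub
    have hcard : (Fintype.piFinset (fun m => if m ∈ R then {w0 m} else Finset.univ)).card =
        n ^ (Rᶜ.card) := by
      rw [Fintype.card_piFinset]
      have : ∀ m, (if m ∈ R then ({w0 m} : Finset (Fin n)) else Finset.univ).card =
          if m ∈ R then 1 else n := by
        intro m; split_ifs <;> simp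
      simp_rw [this]
      rw [Finset.prod_ite, Finset.prod_const, Finset.prod_const]
      simp only [one_pow, one_mul]
      congr 2
      ext m; simp
    rw [hcard] at hc
    calc _ ≤ n ^ Rᶜ.card * n ^ R.card := by rw [hRc]; exact Nat.mul_le_mul_right _ hc
      _ = n ^ b := by
        rw [← pow_add, Finset.card_compl_add_card, Fintype.card_fin]

lemma count_super {n b : ℕ} (Q : Finset (Fin n)) :
    (Finset.univ.filter (fun w : Fin b → Fin n => Q ⊆ Finset.univ.image w)).card * n ^ Q.card ≤
      b ^ Q.card * n ^ b := by
  have hsub : Finset.univ.filter (fun w : Fin b → Fin n => Q ⊆ Finset.univ.image w) ⊆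
      (Finset.univ : Finset (Q → Fin b)).biUnion
        (fun g => Finset.univ.filter (fun w : Fin b → Fin n => ∀ q : Q, w (g q) = q)) := by
    intro w hw
    have hw := (Finset.mem_filter.1 hw).2
    have : ∀ q : Q, ∃ m, w m = q := by
      intro q
      obtain ⟨m, -, hm⟩ := Finset.mem_image.1 (hw q.2)
      exact ⟨m, hm⟩
    choose g hg using this
    simp only [Finset.mem_biUnion, Finset.mem_univ, true_and, Finset.mem_filter]
    exact ⟨g, hg⟩
  calc _ ≤ (∑ g : Q → Fin b,
        (Finset.univ.filter (fun w : Fin b → Fin n => ∀ q : Q, w (g q) = q)).card) * n ^ Q.card :=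
        Nat.mul_le_mul_right _ ((Finset.card_le_card hsub).trans Finset.card_biUnion_le)
    _ = ∑ g : Q → Fin b,
        (Finset.univ.filter (fun w : Fin b → Fin n => ∀ q : Q, w (g q) = q)).card * n ^ Q.card :=
        Finset.sum_mul _ _ _
    _ ≤ ∑ _g : Q → Fin b, n ^ b := Finset.sum_le_sum fun g _ => count_fiber Q g
    _ = _ := by simp

lemma corr_bound {k ℓ a x n b : ℕ} (hn : 1 ≤ n) (hlk : ℓ < k) (hb : b = 2 * x + ℓ + (k - ℓ) * a)
    (hb1 : 1 ≤ b)
    {p L : ℝ} (h0 : 0 ≤ p) (hL : 0 < L)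
    (hΦ : ∀ e, 1 ≤ e → e ≤ a → L ≤ (n : ℝ) ^ ((k - ℓ) * e + ℓ) * p ^ e)
    (A : Finset (Fin b → Fin n)) (hA : ∀ w ∈ A, Function.Injective w) :
    corr p A (edges k ℓ a x) ≤ 2 ^ a * b ^ b * ((n : ℝ) ^ b * p ^ a) ^ 2 / L := by
  have hn' : (1 : ℝ) ≤ n := by exact_mod_cast hn
  have hb' : (1 : ℝ) ≤ b := by exact_mod_cast hb1
  have hAc : (A.card : ℝ) ≤ (n : ℝ) ^ b := by
    have := Finset.card_le_univ A
    rw [Fintype.card_fun, Fintype.card_fin, Fintype.card_fin] at this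
    exact_mod_cast this
  set Z : ℝ := b ^ b * ((n : ℝ) ^ b * p ^ (2 * a)) / L with hZ
  have hZ0 : 0 ≤ Z := by positivity
  have main : ∀ w ∈ A, (∑ w' ∈ A, if Disjoint (edges k ℓ a x w) (edges k ℓ a x w') then 0 else
      p ^ (edges k ℓ a x w ∪ edges k ℓ a x w').card) ≤ 2 ^ a * Z := by
    intro w hw
    have hwi := hA w hw
    -- index set of common edges
    set J : (Fin b → Fin n) → Finset ℕ := fun w' => (Finset.range a).filter
      (fun i => (pos b k (k - ℓ) x i).image w ∈ edges k ℓ a x w') with hJ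
    have hinter : ∀ w', edges k ℓ a x w ∩ edges k ℓ a x w' =
        (J w').image (fun i => (pos b k (k - ℓ) x i).image w) := by
      intro w'
      ext e
      simp only [hJ, Finset.mem_inter, Finset.mem_image, Finset.mem_filter]
      constructor
      · rintro ⟨h1, h2⟩
        obtain ⟨i, hi, rfl⟩ := Finset.mem_image.1 h1
        exact ⟨i, ⟨hi, h2⟩, rfl⟩
      · rintro ⟨i, ⟨hi, h2⟩, rfl⟩
        exact ⟨Finset.mem_image.2 ⟨i, hi, rfl⟩, h2⟩
    have hJc : ∀ w', (edges k ℓ a x w ∩ edges k ℓ a x w').card = (J w').card := by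
      intro w'
      rw [hinter, Finset.card_image_of_injOn]
      refine (edge_inj hlk hb hwi).mono ?_
      simp only [hJ]
      exact_mod_cast Finset.filter_subset _ _
    set Q : Finset ℕ → Finset (Fin n) := fun I => (I.biUnion (pos b k (k - ℓ) x)).image w with hQ
    have hQc : ∀ I, (Q I).card = (I.biUnion (pos b k (k - ℓ) x)).card := fun I =>
      Finset.card_image_of_injective _ hwi
    have hterm : ∀ w' ∈ A, (if Disjoint (edges k ℓ a x w) (edges k ℓ a x w') then 0 else
        p ^ (edges k ℓ a x w ∪ edges k ℓ a x w').card) ≤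
        ∑ I ∈ (Finset.range a).powerset.filter (fun I => I.Nonempty),
          if Q I ⊆ Finset.univ.image w' then p ^ (2 * a - I.card) else 0 := by
      intro w' hw'
      have hnn : ∀ I ∈ (Finset.range a).powerset.filter (fun I => I.Nonempty),
          0 ≤ if Q I ⊆ Finset.univ.image w' then p ^ (2 * a - I.card) else 0 := by
        intro I _; split_ifs
        · positivity
        · exact le_rfl
      split_ifs with hd
      · exact Finset.sum_nonneg hnn
      · have hJm : J w' ∈ (Finset.range a).powerset.filter (fun I => I.Nonempty) := by
          rw [Finset.mem_filter, Finset.mem_powerset]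
          refine ⟨Finset.filter_subset _ _, ?_⟩
          rw [← Finset.card_pos, ← hJc, Finset.card_pos, ← Finset.not_disjoint_iff_nonempty_inter]
          exact hd
        refine le_trans (le_of_eq ?_) (Finset.single_le_sum hnn hJm)
        rw [if_pos]
        · have h1 := Finset.card_union_add_card_inter (edges k ℓ a x w) (edges k ℓ a x w')
          rw [hJc, card_edges hlk hb hwi, card_edges hlk hb (hA w' hw')] at h1
          congr 1
          omega
        · intro v hv
          obtain ⟨m, hm, rfl⟩ := Finset.mem_image.1 hv
          obtain ⟨i, hi, hm⟩ := Finset.mem_biUnion.1 hm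
          have h1 := (Finset.mem_filter.1 hi).2
          obtain ⟨j, -, hj⟩ := Finset.mem_image.1 h1
          have h2 : w m ∈ (pos b k (k - ℓ) x i).image w := Finset.mem_image_of_mem _ hm
          rw [← hj] at h2
          exact Finset.image_subset_image (Finset.subset_univ _) h2
    calc _ ≤ ∑ w' ∈ A, ∑ I ∈ (Finset.range a).powerset.filter (fun I => I.Nonempty),
          (if Q I ⊆ Finset.univ.image w' then p ^ (2 * a - I.card) else 0) :=
          Finset.sum_le_sum hterm
      _ = ∑ I ∈ (Finset.range a).powerset.filter (fun I => I.Nonempty), ∑ w' ∈ A,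
          (if Q I ⊆ Finset.univ.image w' then p ^ (2 * a - I.card) else 0) := Finset.sum_comm
      _ ≤ ∑ I ∈ (Finset.range a).powerset.filter (fun I => I.Nonempty), Z := by
          refine Finset.sum_le_sum fun I hI => ?_
          rw [Finset.mem_filter, Finset.mem_powerset] at hI
          have hIa : I.card ≤ a := by simpa using Finset.card_le_card hI.1
          have hI1 : 1 ≤ I.card := Finset.card_pos.2 hI.2
          have hv : (k - ℓ) * I.card + ℓ ≤ (Q I).card := by
            rw [hQc]
            exact card_pos_union hlk.le hb I (fun i hi => Finset.mem_range.1 (hI.1 hi)) hI.2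
          have hvb : (Q I).card ≤ b := by
            rw [hQc]; simpa using Finset.card_le_univ (I.biUnion (pos b k (k - ℓ) x))
          have hcs := count_super (b := b) (Q I)
          set c := (Finset.univ.filter
            (fun w : Fin b → Fin n => Q I ⊆ Finset.univ.image w)).card with hc
          have e1 : ∑ w' ∈ A, (if Q I ⊆ Finset.univ.image w' then p ^ (2 * a - I.card) else 0) ≤
              c * p ^ (2 * a - I.card) := by
            rw [← Finset.sum_filter, Finset.sum_const, nsmul_eq_mul]
            refine mul_le_mul_of_nonneg_right ?_ (by positivity)
            rw [hc]
            exact_mod_cast Finset.card_le_card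
              (Finset.filter_subset_filter _ (Finset.subset_univ _))
          refine e1.trans ?_
          rw [hZ, le_div_iff₀ hL]
          have hcs' : (c : ℝ) * (n : ℝ) ^ (Q I).card ≤ (b : ℝ) ^ (Q I).card * (n : ℝ) ^ b := by
            exact_mod_cast hcs
          calc (c : ℝ) * p ^ (2 * a - I.card) * L
              ≤ c * p ^ (2 * a - I.card) * ((n : ℝ) ^ ((k - ℓ) * I.card + ℓ) * p ^ I.card) :=
                mul_le_mul_of_nonneg_left (hΦ _ hI1 hIa) (by positivity)
            _ ≤ c * p ^ (2 * a - I.card) * ((n : ℝ) ^ (Q I).card * p ^ I.card) := by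
                gcongr
            _ = (c * (n : ℝ) ^ (Q I).card) * p ^ (2 * a) := by
                have : p ^ (2 * a) = p ^ (2 * a - I.card) * p ^ I.card := by
                  rw [← pow_add]; congr 1; omega
                rw [this]; ring
            _ ≤ (b : ℝ) ^ (Q I).card * (n : ℝ) ^ b * p ^ (2 * a) := by
                gcongr
            _ ≤ (b : ℝ) ^ b * (n : ℝ) ^ b * p ^ (2 * a) := by
                gcongr
            _ = _ := by ring
      _ ≤ 2 ^ a * Z := by
          rw [Finset.sum_const, nsmul_eq_mul]
          refine mul_le_mul_of_nonneg_right ?_ hZ0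
          have := Finset.card_filter_le (Finset.range a).powerset (fun I => I.Nonempty)
          rw [Finset.card_powerset, Finset.card_range] at this
          exact_mod_cast this
  calc corr p A (edges k ℓ a x) ≤ ∑ w ∈ A, 2 ^ a * Z := Finset.sum_le_sum main
    _ = A.card * (2 ^ a * Z) := by rw [Finset.sum_const, nsmul_eq_mul]
    _ ≤ (n : ℝ) ^ b * (2 ^ a * Z) := mul_le_mul_of_nonneg_right hAc (by positivity)
    _ = _ := by rw [hZ]; ring


/-! ### Random selection by counting -/

lemma sel_pair_count {τ : Type*} [Fintype τ] (conf : τ → τ → Prop) {κ : ℝ}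
    (hconf : ∀ w, ((Finset.univ.filter (fun w' => conf w w')).card : ℝ) ≤ κ * Fintype.card τ)
    {N : ℕ} {j j' : Fin N} (hj : j ≠ j') :
    (∑ s : Fin N → τ, if conf (s j) (s j') then (1 : ℝ) else 0) ≤
      κ * (Fintype.card τ : ℝ) ^ N := by
  have hN : 1 ≤ N := by have := j.2; omega
  rw [← (Equiv.funSplitAt j' τ).symm.sum_comp, Fintype.sum_prod_type_right]
  calc _ ≤ ∑ r : ({i // i ≠ j'} → τ), κ * Fintype.card τ := by
        refine Finset.sum_le_sum fun r _ => ?_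
        refine le_trans (le_of_eq ?_) (hconf (r ⟨j, hj⟩))
        rw [Finset.card_filter]
        push_cast
        refine Finset.sum_congr rfl fun v _ => ?_
        simp [Equiv.funSplitAt, Equiv.piSplitAt, hj]
    _ = _ := by
        rw [Finset.sum_const, nsmul_eq_mul, Finset.card_univ, Fintype.card_fun]
        have : Fintype.card {i // i ≠ j'} = N - 1 := by
          rw [Fintype.card_subtype_compl]; simp
        rw [this]
        push_cast
        obtain ⟨M, rfl⟩ : ∃ M, N = M + 1 := ⟨N - 1, by omega⟩
        simp only [Nat.add_sub_cancel, pow_succ]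
        ring

lemma sel_hits {τ : Type*} [Fintype τ] (G : τ → Prop) {ρ : ℝ}
    (hG : ρ * Fintype.card τ ≤ ((Finset.univ.filter G).card : ℝ)) (N : ℕ) :
    (∑ s : Fin N → τ, ((1 : ℝ) / 2) ^ (Finset.univ.filter (fun j => G (s j))).card) ≤
      Real.exp (-(ρ * N / 2)) * (Fintype.card τ : ℝ) ^ N := by
  have h1 : ∀ s : Fin N → τ, ((1 : ℝ) / 2) ^ (Finset.univ.filter (fun j => G (s j))).card =
      ∏ j, (if G (s j) then (1 : ℝ) / 2 else 1) := by
    intro s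
    rw [Finset.prod_ite]; simp
  simp_rw [h1]
  rw [← Fintype.prod_sum (fun (_ : Fin N) (v : τ) => if G v then (1 : ℝ) / 2 else 1)]
  rw [Finset.prod_const, Finset.card_univ, Fintype.card_fin]
  have h2 : ∑ v : τ, (if G v then (1 : ℝ) / 2 else 1) =
      Fintype.card τ - ((Finset.univ.filter G).card : ℝ) / 2 := by
    have : ∀ v : τ, (if G v then (1 : ℝ) / 2 else 1) = 1 - (if G v then (1 : ℝ) else 0) / 2 := by
      intro v; split_ifs <;> norm_num
    simp_rw [this]
    rw [Finset.sum_sub_distrib, ← Finset.sum_div, Finset.card_filter]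
    simp
  have h3 : ∑ v : τ, (if G v then (1 : ℝ) / 2 else 1) ≤
      Real.exp (-(ρ / 2)) * Fintype.card τ := by
    rw [h2]
    have := Real.add_one_le_exp (-(ρ / 2))
    have h4 : (0 : ℝ) ≤ Fintype.card τ := by positivity
    nlinarith
  have h4 : 0 ≤ ∑ v : τ, (if G v then (1 : ℝ) / 2 else 1) :=
    Finset.sum_nonneg fun v _ => by split_ifs <;> norm_num
  refine (pow_le_pow_left₀ h4 h3 N).trans (le_of_eq ?_)
  rw [mul_pow, ← Real.exp_nat_mul]
  congr 2
  ring

lemma sel_exists {τ : Type*} [Fintype τ] [Nonempty τ] (conf : τ → τ → Prop) {κ ρ : ℝ} (hκ : 0 < κ)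
    (hconf : ∀ w, ((Finset.univ.filter (fun w' => conf w w')).card : ℝ) ≤ κ * Fintype.card τ)
    {t : ℕ} (G : Fin t → τ → Prop)
    (hG : ∀ i, ρ * Fintype.card τ ≤ ((Finset.univ.filter (G i)).card : ℝ)) (N : ℕ) (hN : 0 < N)
    (ht : (t : ℝ) * ((2 : ℝ) ^ (ρ * N / 2) * Real.exp (-(ρ * N / 2))) < 1 / 2) :
    ∃ s : Fin N → τ,
      ((Finset.univ.filter
        (fun q : Fin N × Fin N => q.1 < q.2 ∧ conf (s q.1) (s q.2))).card : ℝ) ≤ N ^ 2 * κ ∧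
      ∀ i, ρ * N / 2 ≤ ((Finset.univ.filter (fun j => G i (s j))).card : ℝ) := by
  set T : ℝ := ((Fintype.card τ : ℕ) : ℝ) with hT
  have hT0 : 0 < T := by rw [hT]; exact_mod_cast Fintype.card_pos
  have hN0 : (0 : ℝ) < N := by exact_mod_cast hN
  set pr : (Fin N → τ) → ℝ := fun s => ((Finset.univ.filter
        (fun q : Fin N × Fin N => q.1 < q.2 ∧ conf (s q.1) (s q.2))).card : ℝ) with hpr
  set ht' : Fin t → (Fin N → τ) → ℕ := fun i s => (Finset.univ.filter (fun j => G i (s j))).card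
    with hht
  have hpair : ∑ s, pr s ≤ (N : ℝ) ^ 2 / 2 * (κ * T ^ N) := by
    have e1 : ∀ s, pr s = ∑ q ∈ Finset.univ.filter (fun q : Fin N × Fin N => q.1 < q.2),
        if conf (s q.1) (s q.2) then (1 : ℝ) else 0 := by
      intro s
      simp only [hpr]
      rw [← Finset.filter_filter, Finset.card_filter]
      push_cast
      rfl
    simp_rw [e1]
    rw [Finset.sum_comm]
    calc _ ≤ ∑ q ∈ Finset.univ.filter (fun q : Fin N × Fin N => q.1 < q.2), κ * T ^ N := by
          refine Finset.sum_le_sum fun q hq => ?_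
          exact sel_pair_count conf hconf (ne_of_lt (Finset.mem_filter.1 hq).2)
      _ ≤ _ := by
          rw [Finset.sum_const, nsmul_eq_mul]
          refine mul_le_mul_of_nonneg_right ?_ (by positivity)
          have e2 : (Finset.univ.filter (fun q : Fin N × Fin N => q.1 < q.2)).card +
              (Finset.univ.filter (fun q : Fin N × Fin N => q.2 < q.1)).card ≤ N ^ 2 := by
            rw [← Finset.card_union_of_disjoint]
            · refine (Finset.card_le_univ _).trans ?_
              simp [sq]
            · rw [Finset.disjoint_left]
              intro q h1 h2
              simp only [Finset.mem_filter, Finset.mem_univ, true_and] at h1 h2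
              exact absurd h1 (not_lt.2 h2.le)
          have e3 : (Finset.univ.filter (fun q : Fin N × Fin N => q.1 < q.2)).card =
              (Finset.univ.filter (fun q : Fin N × Fin N => q.2 < q.1)).card := by
            refine Finset.card_bij (fun q _ => q.swap) ?_ ?_ ?_
            · intro q hq; simpa using hq
            · intro q _ q' _ h; exact Prod.swap_injective h
            · intro q hq; exact ⟨q.swap, by simpa using hq, by simp⟩
          rw [← e3] at e2
          have e4 : (2 : ℝ) * (Finset.univ.filter (fun q : Fin N × Fin N => q.1 < q.2)).card ≤
            (N : ℝ) ^ 2 := by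
            have : 2 * (Finset.univ.filter (fun q : Fin N × Fin N => q.1 < q.2)).card ≤ N ^ 2 := by
              omega
            exact_mod_cast this
          linarith
  have hhits : ∀ i, ∑ s, ((1 : ℝ) / 2) ^ (ht' i s) ≤ Real.exp (-(ρ * N / 2)) * T ^ N :=
    fun i => sel_hits (G i) (hG i) N
  have hsum : ∑ s, (pr s / (N ^ 2 * κ) + ∑ i, (2 : ℝ) ^ (ρ * N / 2) * ((1 : ℝ) / 2) ^ (ht' i s)) <
      ∑ _s : Fin N → τ, (1 : ℝ) := by
    rw [Finset.sum_add_distrib, ← Finset.sum_div, Finset.sum_comm]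
    simp_rw [← Finset.mul_sum]
    have e1 : (∑ s, pr s) / (N ^ 2 * κ) ≤ T ^ N / 2 := by
      rw [div_le_iff₀ (by positivity)]
      refine hpair.trans (le_of_eq (by ring))
    have e2 : ∑ i, (2 : ℝ) ^ (ρ * N / 2) * ∑ s, ((1 : ℝ) / 2) ^ (ht' i s) ≤
        t * ((2 : ℝ) ^ (ρ * N / 2) * Real.exp (-(ρ * N / 2))) * T ^ N := by
      calc _ ≤ ∑ i : Fin t, (2 : ℝ) ^ (ρ * N / 2) * (Real.exp (-(ρ * N / 2)) * T ^ N) := by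
            refine Finset.sum_le_sum fun i _ => ?_
            exact mul_le_mul_of_nonneg_left (hhits i) (by positivity)
        _ = _ := by
            rw [Finset.sum_const, Finset.card_univ, Fintype.card_fin, nsmul_eq_mul]; ring
    have e3 : ∑ _s : Fin N → τ, (1 : ℝ) = T ^ N := by
      simp [hT]
    rw [e3]
    have e4 : 0 < T ^ N := by positivity
    rw [← Finset.mul_sum] at e2
    nlinarith
  obtain ⟨s, -, hs⟩ := Finset.exists_lt_of_sum_lt hsum
  have hnn : ∀ i, 0 ≤ (2 : ℝ) ^ (ρ * N / 2) * ((1 : ℝ) / 2) ^ (ht' i s) := fun i => by positivity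
  refine ⟨s, ?_, ?_⟩
  · have : pr s / (N ^ 2 * κ) ≤ 1 := by
      have := Finset.sum_nonneg fun i (_ : i ∈ Finset.univ) => hnn i
      linarith
    rwa [div_le_one (by positivity)] at this
  · intro i
    have h1 := Finset.single_le_sum (fun i (_ : i ∈ Finset.univ) => hnn i) (Finset.mem_univ i)
    have h2 : 0 ≤ pr s / (N ^ 2 * κ) := by
      have : 0 ≤ pr s := by simp only [hpr]; positivity
      positivity
    have h3 : (2 : ℝ) ^ (ρ * N / 2) * ((1 : ℝ) / 2) ^ (ht' i s) < 1 := by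
      linarith
    by_contra hlt
    push Not at hlt
    have h4 : (2 : ℝ) ^ ((ht' i s : ℕ) : ℝ) ≤ (2 : ℝ) ^ (ρ * N / 2) :=
      Real.rpow_le_rpow_of_exponent_le (by norm_num) hlt.le
    rw [Real.rpow_natCast] at h4
    have h5 : ((1 : ℝ) / 2) ^ (ht' i s) * 2 ^ (ht' i s) = 1 := by
      rw [← mul_pow]; norm_num
    have h6 : 0 < ((1 : ℝ) / 2) ^ (ht' i s) := by positivity
    nlinarith


/-! ### Deterministic part -/

lemma det_trim {n b t : ℕ} (hn : 1 ≤ n) (hb : 1 ≤ b) {β γ μ : ℝ} (hβ0 : 0 < β) (hβ1 : β ≤ 1 / 24)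
    (hμ : 0 < μ) (hγ : γ = β / (6 * (b : ℝ) ^ 2)) (T : Finset (Fin b → Fin n))
    (ℱ : Fin t → Finset (Fin b → Fin n))
    (hT : (T.card : ℝ) ≤ (1 + γ) * μ)
    (hF : ∀ i, (24 * β - γ) * μ ≤ ((ℱ i ∩ T).card : ℝ))
    (hU : ∀ (m : Fin b) (U : Finset (Fin n)),
      (1 - (U.card : ℝ) / n - 2 * γ) * μ ≤ ((T.filter (fun w => w m ∉ U)).card : ℝ)) :
    ∃ T' ⊆ T, μ / 2 ≤ (T'.card : ℝ) ∧ (T'.card : ℝ) ≤ 2 * μ ∧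
      (∀ w ∈ T', ((T'.filter (fun w' => ∃ m m', w m = w' m')).card : ℝ) ≤ 2 * b ^ 2 * μ / n) ∧
      ∀ i, 22 * β * μ ≤ ((ℱ i ∩ T').card : ℝ) := by
  have hn0 : (0 : ℝ) < n := by exact_mod_cast hn
  have hb0 : (1 : ℝ) ≤ b := by exact_mod_cast hb
  have hb2 : (1 : ℝ) ≤ (b : ℝ) ^ 2 := one_le_pow₀ hb0
  have hγ0 : 0 < γ := by rw [hγ]; positivity
  have hγb : 6 * (b : ℝ) ^ 2 * γ = β := by rw [hγ]; field_simp
  have hγβ : 6 * γ ≤ β := by nlinarith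
  have hin : ∀ (m : Fin b) (U : Finset (Fin n)),
      ((T.filter (fun w => w m ∈ U)).card : ℝ) ≤ ((U.card : ℝ) / n + 3 * γ) * μ := by
    intro m U
    have h1 := hU m U
    have h2 : ((T.filter (fun w => w m ∈ U)).card : ℝ) +
        ((T.filter (fun w => w m ∉ U)).card : ℝ) = T.card := by
      exact_mod_cast Finset.card_filter_add_card_filter_not (s := T) (fun w => w m ∈ U)
    nlinarith
  set dg : Fin b → Fin n → ℝ := fun m v => ((T.filter (fun w => w m = v)).card : ℝ) with hdg
  set Um : Fin b → Finset (Fin n) := fun m => Finset.univ.filter (fun v => 2 * μ / n < dg m v)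
    with hUm
  have hUmc : ∀ m, ((Um m).card : ℝ) ≤ 3 * γ * n := by
    intro m
    have h1 := hin m (Um m)
    have h2 : ((T.filter (fun w => w m ∈ Um m)).card : ℝ) = ∑ v ∈ Um m, dg m v := by
      rw [Finset.card_eq_sum_card_fiberwise (f := fun w => w m) (t := Um m)]
      · push_cast
        refine Finset.sum_congr rfl fun v hv => ?_
        simp only [hdg]
        congr 2
        ext w
        simp only [Finset.mem_filter]
        constructor
        · rintro ⟨⟨h1, h2⟩, h3⟩; exact ⟨h1, h3⟩
        · rintro ⟨h1, h3⟩; exact ⟨⟨h1, h3 ▸ hv⟩, h3⟩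
      · intro w hw
        exact (Finset.mem_filter.1 hw).2
    have h3 : ((Um m).card : ℝ) * (2 * μ / n) ≤ ∑ v ∈ Um m, dg m v := by
      rw [← nsmul_eq_mul, ← Finset.sum_const]
      exact Finset.sum_le_sum fun v hv => (Finset.mem_filter.1 hv).2.le
    have h4 : ((Um m).card : ℝ) * (2 * μ / n) ≤ (((Um m).card : ℝ) / n + 3 * γ) * μ := by linarith
    have h5 : ((Um m).card : ℝ) * (2 * μ / n) = 2 * (((Um m).card : ℝ) / n) * μ := by ring
    rw [h5] at h4
    have h6 := le_of_mul_le_mul_right h4 hμ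
    have h7 : ((Um m).card : ℝ) / n ≤ 3 * γ := by linarith
    rwa [div_le_iff₀ hn0] at h7
  set U : Finset (Fin n) := Finset.univ.biUnion Um with hUdef
  have hUc : (U.card : ℝ) / n ≤ 3 * b * γ := by
    rw [div_le_iff₀ hn0]
    have h1 : (U.card : ℝ) ≤ ∑ m : Fin b, ((Um m).card : ℝ) := by
      exact_mod_cast Finset.card_biUnion_le
    refine h1.trans ((Finset.sum_le_sum fun m _ => hUmc m).trans (le_of_eq ?_))
    simp
    ring
  set T' := T.filter (fun w => ∀ m, w m ∉ U) with hT'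
  have hrem : ((T \ T').card : ℝ) ≤ β * μ := by
    have hsub : T \ T' ⊆ Finset.univ.biUnion (fun m : Fin b => T.filter (fun w => w m ∈ U)) := by
      intro w hw
      rw [Finset.mem_sdiff] at hw
      have : ∃ m, w m ∈ U := by
        by_contra hcon
        push Not at hcon
        exact hw.2 (Finset.mem_filter.2 ⟨hw.1, hcon⟩)
      obtain ⟨m, hm⟩ := this
      exact Finset.mem_biUnion.2 ⟨m, Finset.mem_univ _, Finset.mem_filter.2 ⟨hw.1, hm⟩⟩
    have h1 : ((T \ T').card : ℝ) ≤ ∑ m : Fin b, ((T.filter (fun w => w m ∈ U)).card : ℝ) := by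
      exact_mod_cast (Finset.card_le_card hsub).trans Finset.card_biUnion_le
    have h2 : ∑ m : Fin b, ((T.filter (fun w => w m ∈ U)).card : ℝ) ≤
        ∑ m : Fin b, (3 * b * γ + 3 * γ) * μ := by
      refine Finset.sum_le_sum fun m _ => (hin m U).trans ?_
      exact mul_le_mul_of_nonneg_right (by linarith) hμ.le
    have h3 : ∑ m : Fin b, (3 * b * γ + 3 * γ) * μ = b * ((3 * b * γ + 3 * γ) * μ) := by simp
    have h4 : (b : ℝ) * ((3 * b * γ + 3 * γ) * μ) ≤ (6 * (b : ℝ) ^ 2 * γ) * μ := by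
      have : (b : ℝ) * (3 * b * γ + 3 * γ) ≤ 6 * (b : ℝ) ^ 2 * γ := by
        have : (b : ℝ) ≤ b ^ 2 := by nlinarith
        nlinarith
      nlinarith
    rw [hγb] at h4
    linarith
  have hsubT : T' ⊆ T := Finset.filter_subset _ _
  have hTT : ((T \ T').card : ℝ) + T'.card = T.card := by
    exact_mod_cast Finset.card_sdiff_add_card_eq_card hsubT
  refine ⟨T', hsubT, ?_, ?_, ?_, ?_⟩
  · have h1 := hU ⟨0, hb⟩ ∅
    have h2 : ((T.filter (fun w => w ⟨0, hb⟩ ∉ (∅ : Finset (Fin n)))).card : ℝ) = T.card := by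
      simp
    rw [h2] at h1
    simp only [Finset.card_empty, Nat.cast_zero, zero_div, sub_zero] at h1
    nlinarith
  · have : (T'.card : ℝ) ≤ T.card := by exact_mod_cast Finset.card_le_card hsubT
    nlinarith
  · intro w hw
    have hw' := (Finset.mem_filter.1 hw).2
    have hsub : T'.filter (fun w' => ∃ m m', w m = w' m') ⊆
        (Finset.univ : Finset (Fin b × Fin b)).biUnion
          (fun q => T.filter (fun w' => w' q.2 = w q.1)) := by
      intro w' h
      obtain ⟨h1, m, m', h2⟩ := Finset.mem_filter.1 h
      exact Finset.mem_biUnion.2 ⟨(m, m'), Finset.mem_univ _,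
        Finset.mem_filter.2 ⟨hsubT h1, h2.symm⟩⟩
    have h1 : ((T'.filter (fun w' => ∃ m m', w m = w' m')).card : ℝ) ≤
        ∑ q : Fin b × Fin b, dg q.2 (w q.1) := by
      simp only [hdg]
      exact_mod_cast (Finset.card_le_card hsub).trans Finset.card_biUnion_le
    have h2 : ∑ q : Fin b × Fin b, dg q.2 (w q.1) ≤ ∑ _q : Fin b × Fin b, 2 * μ / n := by
      refine Finset.sum_le_sum fun q _ => ?_
      by_contra hcon
      push Not at hcon
      refine hw' q.1 (Finset.mem_biUnion.2 ⟨q.2, Finset.mem_univ _, ?_⟩)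
      exact Finset.mem_filter.2 ⟨Finset.mem_univ _, hcon⟩
    refine h1.trans (h2.trans (le_of_eq ?_))
    simp
    ring
  · intro i
    have hsub : ℱ i ∩ T ⊆ (ℱ i ∩ T') ∪ (T \ T') := by
      intro w hw
      rw [Finset.mem_inter] at hw
      by_cases h : w ∈ T'
      · exact Finset.mem_union_left _ (Finset.mem_inter.2 ⟨hw.1, h⟩)
      · exact Finset.mem_union_right _ (Finset.mem_sdiff.2 ⟨hw.2, h⟩)
    have h1 : ((ℱ i ∩ T).card : ℝ) ≤ (ℱ i ∩ T').card + (T \ T').card := by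
      exact_mod_cast (Finset.card_le_card hsub).trans (Finset.card_union_le _ _)
    have h2 := hF i
    nlinarith

lemma det_select {n b t : ℕ} (hn : 1 ≤ n) (hb : 1 ≤ b) {β μ : ℝ} (hβ0 : 0 < β)
    (hμ : 0 < μ) (T : Finset (Fin b → Fin n)) (ℱ : Fin t → Finset (Fin b → Fin n))
    (hT1 : μ / 2 ≤ (T.card : ℝ)) (hT2 : (T.card : ℝ) ≤ 2 * μ)
    (hc : ∀ w ∈ T, ((T.filter (fun w' => ∃ m m', w m = w' m')).card : ℝ) ≤ 2 * b ^ 2 * μ / n)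
    (hF : ∀ i, 22 * β * μ ≤ ((ℱ i ∩ T).card : ℝ)) (hlarge : 22 * (b : ℝ) ^ 2 ≤ 3 * β * n)
    {N : ℕ} (hN : N = ⌊β * n / (2 * (b : ℝ) ^ 2)⌋₊)
    (ht : (t : ℝ) * ((2 : ℝ) ^ (11 * β * N / 2) * Real.exp (-(11 * β * N / 2))) < 1 / 2) :
    ∃ F ⊆ T, (∀ w ∈ F, ∃ i, w ∈ ℱ i) ∧ (F.card : ℝ) ≤ β * n ∧
      (∀ w ∈ F, ∀ w' ∈ F, w ≠ w' → ∀ m m', w m ≠ w' m') ∧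
      (∀ i, β ^ 2 * (n : ℝ) / (b : ℝ) ^ 2 ≤ ((ℱ i ∩ F).card : ℝ)) := by
  have hn0 : (0 : ℝ) < n := by exact_mod_cast hn
  have hb0 : (1 : ℝ) ≤ b := by exact_mod_cast hb
  have hb2 : (1 : ℝ) ≤ (b : ℝ) ^ 2 := one_le_pow₀ hb0
  have hB : (0 : ℝ) < 2 * (b : ℝ) ^ 2 := by positivity
  have hTpos : 0 < T.card := by
    have : (0 : ℝ) < T.card := by linarith
    exact_mod_cast this
  have : Nonempty T := by
    obtain ⟨w, hw⟩ := Finset.card_pos.1 hTpos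
    exact ⟨⟨w, hw⟩⟩
  have hNle : (N : ℝ) ≤ β * n / (2 * (b : ℝ) ^ 2) := by
    rw [hN]; exact Nat.floor_le (by positivity)
  have hNge : β * n / (2 * (b : ℝ) ^ 2) - 1 < N := by
    rw [hN]; exact Nat.sub_one_lt_floor _
  have hNpos : 0 < N := by
    have : (1 : ℝ) ≤ β * n / (2 * (b : ℝ) ^ 2) := by
      rw [le_div_iff₀ hB]; linarith
    have : (0 : ℝ) < N := by linarith
    exact_mod_cast this
  have hcardT : (Fintype.card T : ℝ) = T.card := by simp
  have hsubc : ∀ P : (Fin b → Fin n) → Prop,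
      (Finset.univ.filter (fun w : T => P w.1)).card = (T.filter P).card := by
    intro P
    rw [← Finset.card_map (Function.Embedding.subtype _)]
    congr 1
    ext w
    simp only [Finset.mem_map, Finset.mem_filter, Finset.mem_univ, true_and,
      Function.Embedding.coe_subtype]
    constructor
    · rintro ⟨y, hy, rfl⟩; exact ⟨y.2, hy⟩
    · rintro ⟨h1, h2⟩; exact ⟨⟨w, h1⟩, h2, rfl⟩
  obtain ⟨s, hs1, hs2⟩ := sel_exists (τ := T) (fun w w' => ∃ m m', w.1 m = w'.1 m')
    (κ := 4 * b ^ 2 / n) (ρ := 11 * β) (by positivity)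
    (by
      intro w
      rw [hsubc (fun w' => ∃ m m', w.1 m = w' m'), hcardT]
      have hcw : (((T.filter (fun w' => ∃ m m', w.1 m = w' m')).card : ℕ) : ℝ) ≤
          2 * b ^ 2 * μ / n := hc w.1 w.2
      refine le_trans (le_of_eq (by congr!)) (hcw.trans ?_)
      rw [div_mul_eq_mul_div]
      refine div_le_div_of_nonneg_right ?_ hn0.le
      nlinarith)
    (fun i w => w.1 ∈ ℱ i)
    (by
      intro i
      rw [hsubc (fun w' => w' ∈ ℱ i), hcardT]
      have : T.filter (fun w' => w' ∈ ℱ i) = ℱ i ∩ T := by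
        ext w; simp [and_comm]
      have h9 : 11 * β * (T.card : ℝ) ≤ ((T.filter (fun w' => w' ∈ ℱ i)).card : ℝ) := by
        rw [this]
        refine le_trans ?_ (hF i)
        nlinarith
      refine h9.trans (le_of_eq (by congr!))) N hNpos ht
  set P : Finset (Fin N × Fin N) := Finset.univ.filter
    (fun q : Fin N × Fin N => q.1 < q.2 ∧ ∃ m m', (s q.1).1 m = (s q.2).1 m') with hP
  have hs1' : (P.card : ℝ) ≤ (N : ℝ) ^ 2 * (4 * b ^ 2 / n) := by
    refine le_trans (le_of_eq ?_) hs1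
    rw [hP]
    congr!
  set J : Finset (Fin N) := Finset.univ.filter
    (fun j => ∀ j' < j, ¬ ∃ m m', (s j').1 m = (s j).1 m') with hJ
  have hJc : Jᶜ.card ≤ P.card := by
    have : Jᶜ ⊆ P.image Prod.snd := by
      intro j hj
      rw [Finset.mem_compl] at hj
      have : ∃ j' < j, ∃ m m', (s j').1 m = (s j).1 m' := by
        by_contra hcon
        push Not at hcon
        exact hj (Finset.mem_filter.2 ⟨Finset.mem_univ _, by
          rintro j' hj' ⟨m, m', h⟩; exact hcon j' hj' m m' h⟩)
      obtain ⟨j', hj', h⟩ := this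
      exact Finset.mem_image.2 ⟨(j', j), Finset.mem_filter.2 ⟨Finset.mem_univ _, hj', h⟩, rfl⟩
    exact (Finset.card_le_card this).trans Finset.card_image_le
  have hdis : ∀ j ∈ J, ∀ j' ∈ J, j ≠ j' → ∀ m m', (s j).1 m ≠ (s j').1 m' := by
    intro j hj j' hj' hne m m' h
    rcases lt_or_gt_of_ne hne with hlt | hlt
    · exact (Finset.mem_filter.1 hj').2 j hlt ⟨m, m', h⟩
    · exact (Finset.mem_filter.1 hj).2 j' hlt ⟨m', m, h.symm⟩
  have hinj : Set.InjOn (fun j => (s j).1) (J : Set (Fin N)) := by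
    intro j hj j' hj' h
    by_contra hne
    exact hdis j hj j' hj' hne ⟨0, hb⟩ ⟨0, hb⟩ (congrFun h _)
  set F : Finset (Fin b → Fin n) := (J.image (fun j => (s j).1)).filter (fun w => ∃ i, w ∈ ℱ i)
    with hFd
  refine ⟨F, ?_, ?_, ?_, ?_, ?_⟩
  · intro w hw
    obtain ⟨j, -, rfl⟩ := Finset.mem_image.1 (Finset.mem_filter.1 hw).1
    exact (s j).2
  · intro w hw
    exact (Finset.mem_filter.1 hw).2
  · have h1 : F.card ≤ N := by
      refine (Finset.card_filter_le _ _).trans (Finset.card_image_le.trans ?_)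
      simpa using Finset.card_le_univ J
    have h2 : (F.card : ℝ) ≤ N := by exact_mod_cast h1
    refine h2.trans (hNle.trans ?_)
    rw [div_le_iff₀ hB]
    have : 0 < β * n := by positivity
    nlinarith
  · intro w hw w' hw' hne
    obtain ⟨j, hj, rfl⟩ := Finset.mem_image.1 (Finset.mem_filter.1 hw).1
    obtain ⟨j', hj', rfl⟩ := Finset.mem_image.1 (Finset.mem_filter.1 hw').1
    exact hdis j hj j' hj' (fun h => hne (by rw [h]))
  · intro i
    set H : Finset (Fin N) := Finset.univ.filter (fun j => (s j).1 ∈ ℱ i) with hH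
    have h1 : 11 * β * N / 2 ≤ (H.card : ℝ) := by
      refine (hs2 i).trans (le_of_eq ?_)
      rw [hH]
      congr!
    have h2 : (H ∩ J).image (fun j => (s j).1) ⊆ ℱ i ∩ F := by
      intro w hw
      obtain ⟨j, hj, rfl⟩ := Finset.mem_image.1 hw
      rw [Finset.mem_inter] at hj
      have h3 := (Finset.mem_filter.1 hj.1).2
      exact Finset.mem_inter.2 ⟨h3, Finset.mem_filter.2
        ⟨Finset.mem_image.2 ⟨j, hj.2, rfl⟩, i, h3⟩⟩
    have h3 : (H ∩ J).card ≤ (ℱ i ∩ F).card := by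
      rw [← Finset.card_image_of_injOn (hinj.mono (fun j hj => (Finset.mem_inter.1 hj).2))]
      exact Finset.card_le_card h2
    have h4 : H.card ≤ (H ∩ J).card + Jᶜ.card := by
      refine le_trans (Finset.card_le_card ?_) (Finset.card_union_le _ _)
      intro j hj
      by_cases h : j ∈ J
      · exact Finset.mem_union_left _ (Finset.mem_inter.2 ⟨hj, h⟩)
      · exact Finset.mem_union_right _ (Finset.mem_compl.2 h)
    have h5 : (H.card : ℝ) ≤ (ℱ i ∩ F).card + P.card := by
      exact_mod_cast h4.trans (Nat.add_le_add h3 hJc)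
    have h6 : (N : ℝ) ^ 2 * (4 * b ^ 2 / n) ≤ β ^ 2 * n / (b : ℝ) ^ 2 := by
      calc (N : ℝ) ^ 2 * (4 * b ^ 2 / n) ≤ (β * n / (2 * (b : ℝ) ^ 2)) ^ 2 * (4 * b ^ 2 / n) := by
            gcongr
        _ = _ := by field_simp; norm_num
    set y := β * n / (2 * (b : ℝ) ^ 2) with hy
    have h7 : β ^ 2 * n / (b : ℝ) ^ 2 = 2 * β * y := by rw [hy]; field_simp
    rw [h7] at h6 ⊢
    have h8 : 11 / 3 ≤ y := by
      rw [hy, le_div_iff₀ hB]; linarith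
    have h9 : β * (y - 1) ≤ β * N := mul_le_mul_of_nonneg_left hNge.le hβ0.le
    have h10 : β * (11 / 3) ≤ β * y := mul_le_mul_of_nonneg_left h8 hβ0.le
    linarith

/-! ### The probabilistic part -/

lemma count_mem {n b : ℕ} (m : Fin b) (U : Finset (Fin n)) :
    (Finset.univ.filter (fun w : Fin b → Fin n => w m ∈ U)).card = U.card * n ^ (b - 1) := by
  have h : Finset.univ.filter (fun w : Fin b → Fin n => w m ∈ U) =
      Fintype.piFinset (Function.update (fun _ => (Finset.univ : Finset (Fin n))) m U) := by
    ext w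
    simp only [Finset.mem_filter, Finset.mem_univ, true_and, Fintype.mem_piFinset]
    constructor
    · intro hw j
      by_cases hj : j = m
      · subst hj; simpa using hw
      · simp [Function.update_of_ne hj]
    · intro hw
      simpa using hw m
  rw [h, Fintype.card_piFinset, ← Finset.mul_prod_erase _ _ (Finset.mem_univ m)]
  rw [Finset.prod_congr rfl (g := fun _ => n)]
  · simp
  · intro j hj
    rw [Function.update_of_ne (Finset.ne_of_mem_erase hj)]
    simp

lemma count_eq {n b : ℕ} (hn : 1 ≤ n) {i j : Fin b} (hij : i ≠ j) :
    (Finset.univ.filter (fun w : Fin b → Fin n => w i = w j)).card ≤ n ^ (b - 1) := by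
  have h := count_mem (n := n) i {(⟨0, hn⟩ : Fin n)}
  rw [Finset.card_singleton, one_mul] at h
  rw [← h]
  refine Finset.card_le_card_of_injOn (fun w => Function.update w i ⟨0, hn⟩) ?_ ?_
  · intro w _
    simp
  · intro w hw w' hw' heq
    simp only [Finset.coe_filter, Finset.mem_univ, true_and, Set.mem_ofPred_eq] at hw hw'
    have key : ∀ r, r ≠ i → w r = w' r := by
      intro r hr
      have := congrFun heq r
      simpa [Function.update_of_ne hr] using this
    ext r
    by_cases hr : r = i
    · subst hr
      rw [hw, hw', key j hij.symm]
    · rw [key r hr]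

lemma count_avoid {n b : ℕ} (hn : 1 ≤ n) (hb1 : 1 ≤ b) (m : Fin b) (U : Finset (Fin n)) :
    (1 - (U.card : ℝ) / n - (b : ℝ) ^ 2 / n) * (n : ℝ) ^ b ≤
      (((Finset.univ.filter (fun w : Fin b → Fin n => Function.Injective w)).filter
        (fun w => w m ∉ U)).card : ℝ) := by
  have hn0 : (0 : ℝ) < n := by exact_mod_cast hn
  set S := (Finset.univ.filter (fun w : Fin b → Fin n => Function.Injective w)).filter
        (fun w => w m ∉ U) with hS
  have hcov : (Finset.univ : Finset (Fin b → Fin n)) ⊆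
      S ∪ (Finset.univ.filter (fun w : Fin b → Fin n => w m ∈ U) ∪
        ((Finset.univ : Finset (Fin b × Fin b)).filter (fun q => q.1 ≠ q.2)).biUnion
          (fun q => Finset.univ.filter (fun w : Fin b → Fin n => w q.1 = w q.2))) := by
    intro w _
    simp only [hS, Finset.mem_union, Finset.mem_filter, Finset.mem_univ, true_and,
      Finset.mem_biUnion]
    by_cases h1 : w m ∈ U
    · exact Or.inr (Or.inl h1)
    by_cases h2 : Function.Injective w
    · exact Or.inl ⟨h2, h1⟩
    · refine Or.inr (Or.inr ?_)
      unfold Function.Injective at h2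
      push Not at h2
      obtain ⟨i, j, h3, h4⟩ := h2
      exact ⟨(i, j), h4, h3⟩
  have h1 := (Finset.card_le_card hcov).trans ((Finset.card_union_le _ _).trans
    (Nat.add_le_add_left ((Finset.card_union_le _ _).trans
      (Nat.add_le_add_left Finset.card_biUnion_le _)) _))
  have h2 : ∑ q ∈ (Finset.univ : Finset (Fin b × Fin b)).filter (fun q => q.1 ≠ q.2),
      (Finset.univ.filter (fun w : Fin b → Fin n => w q.1 = w q.2)).card ≤
      b ^ 2 * n ^ (b - 1) := by
    refine (Finset.sum_le_card_nsmul _ _ (n ^ (b - 1)) ?_).trans ?_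
    · intro q hq
      exact count_eq hn (Finset.mem_filter.1 hq).2
    · rw [smul_eq_mul]
      refine Nat.mul_le_mul_right _ ((Finset.card_filter_le _ _).trans (le_of_eq ?_))
      simp [sq]
  rw [count_mem, Finset.card_univ, Fintype.card_fun, Fintype.card_fin, Fintype.card_fin] at h1
  have h3 : n ^ b ≤ S.card + (U.card * n ^ (b - 1) + b ^ 2 * n ^ (b - 1)) := by
    refine h1.trans ?_
    gcongr
  have h4 : (n : ℝ) ^ b ≤ S.card + (U.card * (n : ℝ) ^ (b - 1) + (b : ℝ) ^ 2 * (n : ℝ) ^ (b - 1)) := by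
    exact_mod_cast h3
  have h5 : (n : ℝ) ^ b = n * (n : ℝ) ^ (b - 1) := by
    rw [← pow_succ']; congr 1; omega
  have h6 : (1 - (U.card : ℝ) / n - (b : ℝ) ^ 2 / n) * (n : ℝ) ^ b =
      (n : ℝ) ^ b - U.card * (n : ℝ) ^ (b - 1) - (b : ℝ) ^ 2 * (n : ℝ) ^ (b - 1) := by
    rw [h5]; field_simp
  rw [h6]
  linarith

lemma gProb_eq (n k : ℕ) (p : ℝ) (A : Finset (Finset (Fin n)) → Prop) :
    gProb n k p A = rEx (kSets n k) p (fun E => if A E then 1 else 0) := by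
  unfold gProb rEx
  rw [Finset.sum_filter]
  refine Finset.sum_congr rfl fun E _ => ?_
  by_cases h : A E <;> simp [h]

lemma cnt_eq {n b : ℕ} (k ℓ a x : ℕ) (A : Finset (Fin b → Fin n)) (E : Finset (Finset (Fin n))) :
    cnt A (edges k ℓ a x) E = ((A.filter (fun w => edges k ℓ a x w ⊆ E)).card : ℝ) := by
  unfold cnt
  rw [Finset.sum_ite]
  simp

lemma sum_pow_edges {k ℓ a x n b : ℕ} (hlk : ℓ < k) (hb : b = 2 * x + ℓ + (k - ℓ) * a) (p : ℝ)
    (A : Finset (Fin b → Fin n)) (hA : ∀ w ∈ A, Function.Injective w) :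
    ∑ w ∈ A, p ^ (edges k ℓ a x w).card = A.card * p ^ a := by
  rw [Finset.sum_congr rfl (g := fun _ => p ^ a)]
  · simp
  · intro w hw
    rw [card_edges hlk hb (hA w hw)]

set_option maxHeartbeats 2000000 in
lemma prob_main {k ℓ a x n b t : ℕ} (hn : 1 ≤ n) (hlk : ℓ < k)
    (hb : b = 2 * x + ℓ + (k - ℓ) * a) (hb1 : 1 ≤ b) {p β γ C K : ℝ} (h0 : 0 < p) (h1 : p ≤ 1)
    (hβ0 : 0 < β) (hβ1 : β ≤ 1 / 24) (hγ : γ = β / (6 * (b : ℝ) ^ 2)) (hC : 0 < C)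
    (hK : K = 2 ^ a * (b : ℝ) ^ b)
    (hΦ : ∀ e, 1 ≤ e → e ≤ a → C * n ≤ (n : ℝ) ^ ((k - ℓ) * e + ℓ) * p ^ e)
    (hbn : (b : ℝ) ^ 2 ≤ γ * n) (hlarge : 22 * (b : ℝ) ^ 2 ≤ 3 * β * n)
    {N : ℕ} (hN : N = ⌊β * n / (2 * (b : ℝ) ^ 2)⌋₊)
    (ht : (t : ℝ) * ((2 : ℝ) ^ (11 * β * N / 2) * Real.exp (-(11 * β * N / 2))) < 1 / 2)
    (ℱ : Fin t → Finset (Fin b → Fin n))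
    (hℱ : ∀ i, (∀ w ∈ ℱ i, Function.Injective w) ∧ ((ℱ i).card : ℝ) = 24 * β * (n : ℝ) ^ b) :
    1 - (K / (C * n * γ ^ 2) + (t + b * 2 ^ n) * Real.exp (-(γ ^ 2 * (C * n) / (2 * K)))) ≤
      gProb n k p (fun E => ∃ F : Finset (Fin b → Fin n),
        (∀ w ∈ F, ∃ i, w ∈ ℱ i) ∧ (F.card : ℝ) ≤ β * n ∧
        (∀ w ∈ F, ∀ w' ∈ F, w ≠ w' → ∀ m m', w m ≠ w' m') ∧
        (∀ i, β ^ 2 * (n : ℝ) / (b : ℝ) ^ 2 ≤ ((ℱ i ∩ F).card : ℝ)) ∧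
        (∀ w ∈ F, SpansPax k ℓ a x E w)) := by
  have hn0 : (0 : ℝ) < n := by exact_mod_cast hn
  have hb0 : (1 : ℝ) ≤ b := by exact_mod_cast hb1
  have hγ0 : 0 < γ := by rw [hγ]; positivity
  have hK0 : 0 < K := by rw [hK]; positivity
  set μ : ℝ := (n : ℝ) ^ b * p ^ a with hμd
  have hμ : 0 < μ := by positivity
  set D : ℝ := K * μ ^ 2 / (C * n) with hD
  have hD0 : 0 < D := by positivity
  set W : Finset (Fin b → Fin n) := Finset.univ.filter (fun w => Function.Injective w) with hW
  set S := edges (n := n) (b := b) k ℓ a x with hS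
  have hcorr : ∀ A : Finset (Fin b → Fin n), (∀ w ∈ A, Function.Injective w) →
      corr p A S ≤ D := by
    intro A hA
    have := corr_bound hn hlk hb hb1 h0.le (by positivity) hΦ A hA
    rw [hD, hK]
    exact this
  have hsub : ∀ A : Finset (Fin b → Fin n), (∀ w ∈ A, Function.Injective w) →
      ∀ w ∈ A, S w ⊆ kSets n k := fun A hA w hw => edges_sub hlk hb (hA w hw)
  have hWi : ∀ w ∈ W, Function.Injective w := fun w hw => (Finset.mem_filter.1 hw).2
  set WU : Fin b → Finset (Fin n) → Finset (Fin b → Fin n) :=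
    fun m U => W.filter (fun w => w m ∉ U) with hWU
  have hWUi : ∀ m U, ∀ w ∈ WU m U, Function.Injective w :=
    fun m U w hw => hWi w (Finset.mem_filter.1 hw).1
  -- bad events
  set B1 : Finset (Finset (Fin n)) → ℝ := fun E =>
    if (∑ w ∈ W, p ^ (S w).card) + γ * μ < cnt W S E then 1 else 0 with hB1
  set B2 : Finset (Fin b → Fin n) → Finset (Finset (Fin n)) → ℝ := fun A E =>
    if cnt A S E < (∑ w ∈ A, p ^ (S w).card) - γ * μ then 1 else 0 with hB2
  have hB1n : ∀ E, 0 ≤ B1 E := fun E => by simp only [hB1]; split_ifs <;> norm_num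
  have hB2n : ∀ A E, 0 ≤ B2 A E := fun A E => by simp only [hB2]; split_ifs <;> norm_num
  have hP1 : rEx (kSets n k) p B1 ≤ K / (C * n * γ ^ 2) := by
    refine (cheby h0.le h1 W S (hsub W hWi) (hcorr W hWi) (by positivity)).trans (le_of_eq ?_)
    rw [hD]; field_simp
  have hP2 : ∀ A : Finset (Fin b → Fin n), (∀ w ∈ A, Function.Injective w) →
      rEx (kSets n k) p (B2 A) ≤ Real.exp (-(γ ^ 2 * (C * n) / (2 * K))) := by
    intro A hA
    refine (janson h0.le h1 A S (hsub A hA) (hcorr A hA) hD0 (by positivity)).trans (le_of_eq ?_)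
    congr 1
    rw [hD]; field_simp
  rw [gProb_eq]
  set G : Finset (Finset (Fin n)) → Prop := fun E => ∃ F : Finset (Fin b → Fin n),
        (∀ w ∈ F, ∃ i, w ∈ ℱ i) ∧ (F.card : ℝ) ≤ β * n ∧
        (∀ w ∈ F, ∀ w' ∈ F, w ≠ w' → ∀ m m', w m ≠ w' m') ∧
        (∀ i, β ^ 2 * (n : ℝ) / (b : ℝ) ^ 2 ≤ ((ℱ i ∩ F).card : ℝ)) ∧
        (∀ w ∈ F, SpansPax k ℓ a x E w) with hG
  have hdet : ∀ E, B1 E = 0 → (∀ i, B2 (ℱ i) E = 0) → (∀ m U, B2 (WU m U) E = 0) → G E := by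
    intro E e1 e2 e3
    have e1' : cnt W S E ≤ (∑ w ∈ W, p ^ (S w).card) + γ * μ := by
      by_contra hcon
      push Not at hcon
      simp [hB1, hcon] at e1
    have e2' : ∀ A, B2 A E = 0 → (∑ w ∈ A, p ^ (S w).card) - γ * μ ≤ cnt A S E := by
      intro A e
      by_contra hcon
      push Not at hcon
      simp [hB2, hcon] at e
    set T := W.filter (fun w => S w ⊆ E) with hT
    have c1 : (T.card : ℝ) ≤ (1 + γ) * μ := by
      rw [sum_pow_edges hlk hb p W hWi, cnt_eq] at e1'
      have hWc : (W.card : ℝ) ≤ (n : ℝ) ^ b := by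
        have := Finset.card_le_univ W
        rw [Fintype.card_fun, Fintype.card_fin, Fintype.card_fin] at this
        exact_mod_cast this
      have : (W.card : ℝ) * p ^ a ≤ μ := by
        rw [hμd]; gcongr
      linarith
    have c2 : ∀ i, (24 * β - γ) * μ ≤ ((ℱ i ∩ T).card : ℝ) := by
      intro i
      have h2 := e2' _ (e2 i)
      rw [sum_pow_edges hlk hb p _ (hℱ i).1, cnt_eq, (hℱ i).2] at h2
      have h3 : (ℱ i).filter (fun w => edges k ℓ a x w ⊆ E) = ℱ i ∩ T := by
        ext w
        simp only [hT, hW, hS, Finset.mem_filter, Finset.mem_inter, Finset.mem_univ, true_and]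
        constructor
        · rintro ⟨q1, q2⟩; exact ⟨q1, (hℱ i).1 w q1, q2⟩
        · rintro ⟨q1, _, q2⟩; exact ⟨q1, q2⟩
      rw [h3] at h2
      refine le_trans (le_of_eq ?_) h2
      rw [hμd]; ring
    have c3 : ∀ (m : Fin b) (U : Finset (Fin n)),
        (1 - (U.card : ℝ) / n - 2 * γ) * μ ≤ ((T.filter (fun w => w m ∉ U)).card : ℝ) := by
      intro m U
      have h2 := e2' _ (e3 m U)
      rw [sum_pow_edges hlk hb p _ (hWUi m U), cnt_eq] at h2
      have h3 : (WU m U).filter (fun w => edges k ℓ a x w ⊆ E) =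
          T.filter (fun w => w m ∉ U) := by
        ext w
        simp only [hT, hWU, hS, Finset.mem_filter]
        tauto
      rw [h3] at h2
      have h4 : (1 - (U.card : ℝ) / n - (b : ℝ) ^ 2 / n) * (n : ℝ) ^ b ≤ ((WU m U).card : ℝ) :=
        count_avoid hn hb1 m U
      have h5 : (b : ℝ) ^ 2 / n ≤ γ := by rwa [div_le_iff₀ hn0]
      have h6 : (1 - (U.card : ℝ) / n - (b : ℝ) ^ 2 / n) * μ ≤ ((WU m U).card : ℝ) * p ^ a := by
        rw [hμd, ← mul_assoc]
        exact mul_le_mul_of_nonneg_right h4 (by positivity)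
      nlinarith
    obtain ⟨T', hT'T, d1, d2, d3, d4⟩ := det_trim hn hb1 hβ0 hβ1 hμ hγ T ℱ c1 c2 c3
    obtain ⟨F, hFT, f1, f2, f3, f4⟩ :=
      det_select hn hb1 hβ0 hμ T' ℱ d1 d2 d3 d4 hlarge hN ht
    refine ⟨F, f1, f2, f3, f4, ?_⟩
    intro w hw
    have := Finset.mem_filter.1 (hT'T (hFT hw))
    exact spansPax_iff.2 ⟨hWi w this.1, this.2⟩
  have hpt : ∀ E, 1 - (B1 E + (∑ i, B2 (ℱ i) E +
      ∑ q : Fin b × Finset (Fin n), B2 (WU q.1 q.2) E)) ≤ if G E then 1 else 0 := by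
    intro E
    have s1 : 0 ≤ ∑ i, B2 (ℱ i) E := Finset.sum_nonneg fun i _ => hB2n _ _
    have s2 : 0 ≤ ∑ q : Fin b × Finset (Fin n), B2 (WU q.1 q.2) E :=
      Finset.sum_nonneg fun i _ => hB2n _ _
    have s3 := hB1n E
    split_ifs with hGE
    · linarith
    · by_contra hcon
      push Not at hcon
      have hval : ∀ A, B2 A E < 1 → B2 A E = 0 := by
        intro A
        simp only [hB2]
        split_ifs <;> norm_num
      have u1 : B1 E = 0 := by
        have : B1 E < 1 := by linarith
        revert this
        simp only [hB1]
        split_ifs <;> norm_num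
      have u2 : ∀ i, B2 (ℱ i) E = 0 := by
        intro i
        apply hval
        have := Finset.single_le_sum (f := fun i => B2 (ℱ i) E) (fun i _ => hB2n _ _)
          (Finset.mem_univ i)
        beta_reduce at this
        linarith
      have u3 : ∀ m U, B2 (WU m U) E = 0 := by
        intro m U
        apply hval
        have := Finset.single_le_sum (f := fun q : Fin b × Finset (Fin n) => B2 (WU q.1 q.2) E)
          (fun i _ => hB2n _ _) (Finset.mem_univ (m, U))
        beta_reduce at this
        linarith
      exact hGE (hdet E u1 u2 u3)
  refine le_trans ?_ (rEx_mono (f := fun E => 1 - (B1 E + (∑ i, B2 (ℱ i) E +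
      ∑ q : Fin b × Finset (Fin n), B2 (WU q.1 q.2) E))) h0.le h1
      fun E _ => (hpt E).trans (le_of_eq (by congr!)))
  rw [rEx_sub, rEx_const, rEx_add, rEx_add, rEx_sum, rEx_sum]
  have v1 : ∑ i, rEx (kSets n k) p (B2 (ℱ i)) ≤
      t * Real.exp (-(γ ^ 2 * (C * n) / (2 * K))) := by
    refine (Finset.sum_le_card_nsmul _ _ _ fun i _ => hP2 _ (hℱ i).1).trans (le_of_eq ?_)
    simp
  have v2 : ∑ q : Fin b × Finset (Fin n), rEx (kSets n k) p (B2 (WU q.1 q.2)) ≤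
      b * 2 ^ n * Real.exp (-(γ ^ 2 * (C * n) / (2 * K))) := by
    refine (Finset.sum_le_card_nsmul _ _ _ fun q _ => hP2 _ (hWUi q.1 q.2)).trans (le_of_eq ?_)
    simp
  have v3 : rEx (kSets n k) p (fun E => B1 E) = rEx (kSets n k) p B1 := rfl
  have v4 : (t + b * 2 ^ n) * Real.exp (-(γ ^ 2 * (C * n) / (2 * K))) =
    t * Real.exp (-(γ ^ 2 * (C * n) / (2 * K))) +
      b * 2 ^ n * Real.exp (-(γ ^ 2 * (C * n) / (2 * K))) := by ring
  rw [v4]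
  linarith

/-! ### Estimates for large `n` -/

lemma phi_cond {k ℓ a n C : ℕ} (hl1 : 1 ≤ ℓ) (hlk : ℓ < k) (ha : 1 ≤ a) {ε p : ℝ}
    (hε0 : 0 < ε) (hε : ε ≤ (ℓ : ℝ) / (3 * (a : ℝ))) (hn : 1 ≤ n) (hC1 : 1 ≤ C) (hnC : C ^ 3 ≤ n)
    (hp : (2 ≤ ℓ → (n : ℝ) ^ (-((k : ℝ) - (ℓ : ℝ)) - ε) ≤ p) ∧
           (ℓ = 1 → (C : ℝ) * (n : ℝ) ^ (-((k : ℝ) - 1)) ≤ p)) :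
    0 < p ∧ ∀ e, 1 ≤ e → e ≤ a → (C : ℝ) * n ≤ (n : ℝ) ^ ((k - ℓ) * e + ℓ) * p ^ e := by
  have hn0 : (0 : ℝ) < n := by exact_mod_cast hn
  have hn1 : (1 : ℝ) ≤ n := by exact_mod_cast hn
  have hC1' : (1 : ℝ) ≤ C := by exact_mod_cast hC1
  have ha0 : (0 : ℝ) < a := by exact_mod_cast ha
  have hkl : ((k - ℓ : ℕ) : ℝ) = (k : ℝ) - ℓ := by rw [Nat.cast_sub hlk.le]
  have hsplit : ∀ e : ℕ, (n : ℝ) ^ ((k - ℓ) * e + ℓ) * p ^ e =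
      (n : ℝ) ^ ℓ * ((n : ℝ) ^ (k - ℓ) * p) ^ e := by
    intro e
    rw [pow_add, pow_mul, mul_pow]; ring
  rcases Nat.lt_or_ge 1 ℓ with h2 | h2
  · have hp' := hp.1 h2
    have hq : (n : ℝ) ^ (-ε) ≤ (n : ℝ) ^ (k - ℓ) * p := by
      calc (n : ℝ) ^ (-ε) = (n : ℝ) ^ (k - ℓ) * (n : ℝ) ^ (-((k : ℝ) - (ℓ : ℝ)) - ε) := by
            rw [← Real.rpow_natCast, ← Real.rpow_add hn0, hkl]
            congr 1; ring
        _ ≤ _ := by gcongr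
    refine ⟨lt_of_lt_of_le (by positivity) hp', fun e he1 he2 => ?_⟩
    rw [hsplit]
    have hea : (e : ℝ) ≤ a := by exact_mod_cast he2
    have h2' : (2 : ℝ) ≤ ℓ := by exact_mod_cast h2
    have hεe : ε * e ≤ (ℓ : ℝ) / 3 := by
      calc ε * e ≤ (ℓ : ℝ) / (3 * (a : ℝ)) * a := by gcongr
        _ = _ := by field_simp
    have hC3 : (C : ℝ) ≤ (n : ℝ) ^ ((1 : ℝ) / 3) := by
      have h : ((C : ℝ) ^ (3 : ℕ)) ≤ n := by exact_mod_cast hnC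
      calc (C : ℝ) = ((C : ℝ) ^ (3 : ℕ)) ^ ((1 : ℝ) / 3) := by
            rw [← Real.rpow_natCast, ← Real.rpow_mul (by positivity)]; norm_num
        _ ≤ _ := Real.rpow_le_rpow (by positivity) h (by norm_num)
    calc (C : ℝ) * n ≤ (n : ℝ) ^ ((1 : ℝ) / 3) * (n : ℝ) ^ (1 : ℝ) := by
          rw [Real.rpow_one]; gcongr
      _ = (n : ℝ) ^ ((4 : ℝ) / 3) := by rw [← Real.rpow_add hn0]; norm_num
      _ ≤ (n : ℝ) ^ ((ℓ : ℝ) + (-ε) * e) :=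
          Real.rpow_le_rpow_of_exponent_le hn1 (by linarith)
      _ = (n : ℝ) ^ ℓ * ((n : ℝ) ^ (-ε)) ^ e := by
          rw [Real.rpow_add hn0, Real.rpow_natCast, Real.rpow_mul hn0.le, Real.rpow_natCast]
      _ ≤ _ := by gcongr
  · have hl : ℓ = 1 := by omega
    subst hl
    have hp' := hp.2 rfl
    have hq : (C : ℝ) ≤ (n : ℝ) ^ (k - 1) * p := by
      calc (C : ℝ) = (n : ℝ) ^ (k - 1) * ((C : ℝ) * (n : ℝ) ^ (-((k : ℝ) - 1))) := by
            have : ((k : ℝ) - 1) = ((k - 1 : ℕ) : ℝ) := by rw [hkl]; simp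
            rw [this, Real.rpow_neg hn0.le, Real.rpow_natCast]
            field_simp
        _ ≤ _ := by gcongr
    refine ⟨lt_of_lt_of_le (by positivity) hp', fun e he1 he2 => ?_⟩
    rw [hsplit, pow_one, mul_comm]
    have : (C : ℝ) ≤ ((n : ℝ) ^ (k - 1) * p) ^ e := by
      calc (C : ℝ) ≤ (C : ℝ) ^ e := le_self_pow₀ hC1' (by omega)
        _ ≤ _ := by gcongr
    gcongr

lemma tendsto_pow_exp (s : ℕ) {c : ℝ} (hc : 0 < c) :
    Filter.Tendsto (fun n : ℕ => (n : ℝ) ^ s * Real.exp (-c * n)) Filter.atTop (nhds 0) := by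
  have h := (tendsto_rpow_mul_exp_neg_mul_atTop_nhds_zero (s : ℝ) c hc).comp
    (tendsto_natCast_atTop_atTop (R := ℝ))
  refine h.congr fun n => ?_
  simp [Real.rpow_natCast]

lemma asym_sel {b : ℕ} (hb1 : 1 ≤ b) (k : ℕ) {β : ℝ} (hβ0 : 0 < β) :
    ∀ᶠ n : ℕ in Filter.atTop, ∀ t : ℕ, t ≤ n ^ (2 * k) →
      (t : ℝ) * ((2 : ℝ) ^ (11 * β * (⌊β * n / (2 * (b : ℝ) ^ 2)⌋₊ : ℕ) / 2) *
        Real.exp (-(11 * β * (⌊β * n / (2 * (b : ℝ) ^ 2)⌋₊ : ℕ) / 2))) < 1 / 2 := by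
  have hb0 : (1 : ℝ) ≤ b := by exact_mod_cast hb1
  have hlog : 0 < 1 - Real.log 2 := by have := Real.log_two_lt_d9; linarith
  set r := 1 - Real.log 2 with hr
  set c := r * (11 * β / 2) * (β / (2 * (b : ℝ) ^ 2)) with hc
  have hc0 : 0 < c := by positivity
  set M := Real.exp (r * (11 * β / 2)) with hM
  have h := (tendsto_pow_exp (2 * k) hc0).const_mul M
  rw [mul_zero] at h
  filter_upwards [h.eventually_lt_const (show (0 : ℝ) < 1 / 2 by norm_num)] with n hn t ht
  set N := ⌊β * n / (2 * (b : ℝ) ^ 2)⌋₊ with hN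
  have hNge : β * n / (2 * (b : ℝ) ^ 2) - 1 < N := Nat.sub_one_lt_floor _
  have ht' : (t : ℝ) ≤ (n : ℝ) ^ (2 * k) := by exact_mod_cast ht
  have h1 : (2 : ℝ) ^ (11 * β * N / 2) * Real.exp (-(11 * β * N / 2)) =
      Real.exp (-(r * (11 * β / 2) * N)) := by
    rw [Real.rpow_def_of_pos (by norm_num), ← Real.exp_add]
    congr 1
    rw [hr]; ring
  have h2 : -(r * (11 * β / 2) * N) ≤ r * (11 * β / 2) + -c * n := by
    have h3 : 0 < r * (11 * β / 2) := by positivity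
    have h4 := mul_le_mul_of_nonneg_left hNge.le h3.le
    have h5 : r * (11 * β / 2) * (β * n / (2 * (b : ℝ) ^ 2) - 1) =
      c * n - r * (11 * β / 2) := by rw [hc]; ring
    linarith
  refine lt_of_le_of_lt ?_ hn
  rw [h1]
  calc (t : ℝ) * Real.exp (-(r * (11 * β / 2) * N)) ≤
        (n : ℝ) ^ (2 * k) * Real.exp (r * (11 * β / 2) + -c * n) := by
        gcongr
    _ = _ := by rw [Real.exp_add]; ring

lemma asym_prob (b k : ℕ) {δ : ℝ} (hδ : 0 < δ) :
    ∀ᶠ n : ℕ in Filter.atTop, 1 / (4 * (n : ℝ)) +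
      ((n : ℝ) ^ (2 * k) + b * 2 ^ n) * Real.exp (-(2 * n)) ≤ δ := by
  have h1 := tendsto_pow_exp (2 * k) (show (0 : ℝ) < 2 by norm_num)
  have h2 := (tendsto_pow_exp 0 (show (0 : ℝ) < 1 by norm_num)).const_mul (b : ℝ)
  have h3 := (tendsto_inv_atTop_nhds_zero_nat (𝕜 := ℝ)).const_mul (1 / 4 : ℝ)
  have h := (h3.add h1).add h2
  simp only [mul_zero, add_zero] at h
  filter_upwards [h.eventually_le_const hδ] with n hn
  refine le_trans ?_ hn
  have e1 : (2 : ℝ) ^ n * Real.exp (-(2 * n)) ≤ Real.exp (-1 * n) := by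
    have : (2 : ℝ) ^ n ≤ Real.exp n := by
      have h5 : (2 : ℝ) ≤ Real.exp 1 := by have := Real.exp_one_gt_d9; linarith
      calc (2 : ℝ) ^ n ≤ (Real.exp 1) ^ n := by gcongr
        _ = _ := by rw [← Real.exp_nat_mul, mul_one]
    calc (2 : ℝ) ^ n * Real.exp (-(2 * n)) ≤ Real.exp n * Real.exp (-(2 * n)) := by gcongr
      _ = _ := by rw [← Real.exp_add]; congr 1; ring
  have e2 := mul_le_mul_of_nonneg_left e1 (Nat.cast_nonneg (α := ℝ) b)
  have e3 : 1 / (4 * (n : ℝ)) = 1 / 4 * (n : ℝ)⁻¹ := by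
    rw [one_div, mul_inv]; norm_num
  have e4 : Real.exp (-(2 * n)) = Real.exp (-2 * n) := by congr 1; ring
  rw [e3, e4]
  rw [e4] at e2
  rw [pow_zero, one_mul]
  linarith

/-- Lemma 3.2. Given at most `n^{2k}` families of `24β n^b` ordered
`b`-subsets each, a.a.s. there is a family `ℱ ⊆ ⋃ᵢ ℱᵢ` of at most `βn` pairwise disjoint
ordered `b`-sets, each spanning a labeled copy of `P_{a,x}` in `G`, with
`|ℱᵢ ∩ ℱ| ≥ β²n/b²` for every `i`. -/
theorem disjoint_pax_selection
    (k ℓ a x : ℕ) (hk : 3 ≤ k) (hl1 : 1 ≤ ℓ) (hlk : ℓ ≤ k - 1)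
    (ha : 1 ≤ a) (hx : x ≤ k)
    (ε : ℝ) (hε0 : 0 < ε) (hε : ε ≤ (ℓ : ℝ) / (3 * (a : ℝ)))
    (β : ℝ) (hβ0 : 0 < β) :
    ∃ C₀ : ℕ, ∀ C : ℕ, C₀ ≤ C →
      ∀ δ : ℝ, 0 < δ → ∃ n₀ : ℕ, ∀ n : ℕ, n₀ ≤ n →
        ∀ t : ℕ, t ≤ n ^ (2 * k) →
        ∀ ℱ : Fin t → Finset (Fin (2 * x + ℓ + (k - ℓ) * a) → Fin n),
          (∀ i, (∀ w ∈ ℱ i, Function.Injective w) ∧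
            ((ℱ i).card : ℝ) = 24 * β * (n : ℝ) ^ (2 * x + ℓ + (k - ℓ) * a)) →
        ∀ p : ℝ, 0 ≤ p → p ≤ 1 →
          ((2 ≤ ℓ → (n : ℝ) ^ (-((k : ℝ) - (ℓ : ℝ)) - ε) ≤ p) ∧
           (ℓ = 1 → (C : ℝ) * (n : ℝ) ^ (-((k : ℝ) - 1)) ≤ p)) →
          1 - δ ≤ gProb n k p (fun E =>
            ∃ F : Finset (Fin (2 * x + ℓ + (k - ℓ) * a) → Fin n),
              (∀ w ∈ F, ∃ i, w ∈ ℱ i) ∧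
              (F.card : ℝ) ≤ β * (n : ℝ) ∧
              (∀ w ∈ F, ∀ w' ∈ F, w ≠ w' → ∀ m m', w m ≠ w' m') ∧
              (∀ i, β ^ 2 * (n : ℝ) / ((2 * x + ℓ + (k - ℓ) * a : ℕ) : ℝ) ^ 2 ≤
                ((ℱ i ∩ F).card : ℝ)) ∧
              (∀ w ∈ F, SpansPax k ℓ a x E w)) := by
  have hlk' : ℓ < k := by omega
  obtain ⟨b, hb⟩ : ∃ b : ℕ, b = 2 * x + ℓ + (k - ℓ) * a := ⟨_, rfl⟩
  have hb1 : 1 ≤ b := by omega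
  rw [← hb]
  have hb0 : (1 : ℝ) ≤ b := by exact_mod_cast hb1
  obtain ⟨γ, hγ⟩ : ∃ γ : ℝ, γ = β / (6 * (b : ℝ) ^ 2) := ⟨_, rfl⟩
  obtain ⟨K, hK⟩ : ∃ K : ℝ, K = 2 ^ a * (b : ℝ) ^ b := ⟨_, rfl⟩
  have hγ0 : 0 < γ := by rw [hγ]; positivity
  have hK0 : 0 < K := by rw [hK]; positivity
  refine ⟨max 1 ⌈4 * K / γ ^ 2⌉₊, fun C hC δ hδ => ?_⟩
  have hC1 : 1 ≤ C := (le_max_left _ _).trans hC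
  have hC1' : (1 : ℝ) ≤ C := by exact_mod_cast hC1
  have hCK : 4 * K ≤ γ ^ 2 * C := by
    have h1 : (⌈4 * K / γ ^ 2⌉₊ : ℝ) ≤ C := by exact_mod_cast (le_max_right _ _).trans hC
    have h2 := (Nat.le_ceil (4 * K / γ ^ 2)).trans h1
    rw [div_le_iff₀ (by positivity)] at h2
    linarith
  have hev : ∀ᶠ n : ℕ in Filter.atTop, (1 ≤ n ∧ C ^ 3 ≤ n) ∧ (b : ℝ) ^ 2 ≤ γ * n ∧
      22 * (b : ℝ) ^ 2 ≤ 3 * β * n := by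
    have hcast := tendsto_natCast_atTop_atTop (R := ℝ)
    refine ((Filter.eventually_ge_atTop 1).and (Filter.eventually_ge_atTop (C ^ 3))).and
      (Filter.Eventually.and ?_ ?_)
    · exact (hcast.const_mul_atTop hγ0).eventually_ge_atTop _
    · exact (hcast.const_mul_atTop (by positivity : 0 < 3 * β)).eventually_ge_atTop _
  obtain ⟨n₀, hn₀⟩ := Filter.eventually_atTop.1
    (hev.and ((asym_sel hb1 k hβ0).and (asym_prob b k hδ)))
  refine ⟨n₀, fun n hn t ht ℱ hℱ p h0 h1 hp => ?_⟩
  obtain ⟨⟨⟨hn1, hnC⟩, hbn, hlarge⟩, hsel, hprob⟩ := hn₀ n hn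
  have hn0 : (0 : ℝ) < n := by exact_mod_cast hn1
  rcases Nat.eq_zero_or_pos t with ht0 | ht0
  · subst ht0
    rw [gProb_eq]
    refine le_trans ?_ (rEx_mono (f := fun _ => 1) h0 h1 fun E _ => ?_)
    · rw [rEx_const]; linarith
    · rw [if_pos]
      exact ⟨∅, by simp, by simp; positivity, by simp, fun i => i.elim0, by simp⟩
  have hβ1 : β ≤ 1 / 24 := by
    have h2 := (hℱ ⟨0, ht0⟩).2
    have h3 : ((ℱ ⟨0, ht0⟩).card : ℝ) ≤ (n : ℝ) ^ b := by
      have := Finset.card_le_univ (ℱ ⟨0, ht0⟩)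
      rw [Fintype.card_fun, Fintype.card_fin, Fintype.card_fin] at this
      exact_mod_cast this
    rw [h2] at h3
    have h4 : (0 : ℝ) < (n : ℝ) ^ b := by positivity
    have h5 : 24 * β ≤ 1 := by
      by_contra hcon
      push Not at hcon
      nlinarith
    linarith
  obtain ⟨hp0, hΦ⟩ := phi_cond hl1 hlk' ha hε0 hε hn1 hC1 hnC hp
  have hmain := prob_main hn1 hlk' hb hb1 hp0 h1 hβ0 hβ1 hγ (by linarith : (0 : ℝ) < C) hK hΦ
    hbn hlarge rfl (hsel t ht) ℱ hℱ
  refine le_trans ?_ hmain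
  have g1 : K / (C * n * γ ^ 2) ≤ 1 / (4 * n) := by
    rw [div_le_div_iff₀ (by positivity) (by positivity)]
    nlinarith
  have g2 : Real.exp (-(γ ^ 2 * (C * n) / (2 * K))) ≤ Real.exp (-(2 * n)) := by
    apply Real.exp_le_exp.2
    rw [neg_le_neg_iff, le_div_iff₀ (by positivity)]
    nlinarith
  have g3 : (t : ℝ) ≤ (n : ℝ) ^ (2 * k) := by exact_mod_cast ht
  have g4 : ((t : ℝ) + b * 2 ^ n) * Real.exp (-(γ ^ 2 * (C * n) / (2 * K))) ≤
      ((n : ℝ) ^ (2 * k) + b * 2 ^ n) * Real.exp (-(2 * n)) := by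
    gcongr
  linarith
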